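/- arXiv:1610.07342 — 8 statements merged into one kernel-verified Lean document; each statement's English description precedes it below -/
import Mathlib

section
/- Let φ be a smooth function of the lattice variables u_{m1},…,u_{m2} (m1 ≥ m2). Then the variational derivative δφ/δu_0 = Σ_{k=m2}^{m1} T^{−k}(∂φ/∂u_k) vanishes identically if and only if there exist a constant κ and a smooth function ω of finitely many lattice variables such that φ = κ + (T−1)ω identically, i.e. φ(u_{m1},…,u_{m2}) = κ + ω(u_{p+1},…,u_{q+1}) − ω(u_p,…,u_q) for all real sequences (u_j). -/
/-!
The easy direction is a telescoping sum: if `φ = κ + (T - 1) ω`, then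
`T^{-k} ∂φ/∂u_k = a (k - 1) - a k` with `a k = T^{-k} ∂ω/∂u_k`, and `a` has finite support
(`pd_shift_sub`, `sum_Icc_telescope`).

For the converse no integration is needed. The vanishing of the variational derivative says that the
sum of all translates of `φ` whose window contains a given site does not depend on the variable at
that site (`sum_shift_update`). Let `cut c u` agree with `u` at the sites left of `c` and be zero
elsewhere, and put `ω u = -∑_{j = 0}^{n} φ (T^j (cut m1 u))`, where `n = m1 - m2`. Then
`T (cut (m1 + 1) u) = cut m1 (T u)`, so that `ω (T u)` is a sum of translates of `φ` along
`cut (m1 + 1) u`. By the independence property, the sum defining `ω u` may be taken along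
`cut (m1 + 1) u` as well, this sequence differing from `cut m1 u` at site `m1` only. What is left of
`ω (T u) - ω u` is the first term `φ u` and the term beyond the last, which is `φ 0`.
-/

open Finset

noncomputable section

/-- The shift operator: `(shift s u) j = u (j + s)`, so that for a lattice
function `F`, `(T^s F) u = F (shift s u)`. -/
def shift (s : ℤ) (u : ℤ → ℝ) : ℤ → ℝ := fun j => u (j + s)

/-- Partial derivative of a lattice function `φ` with respect to the lattice
variable `u_k`, evaluated at the sequence `u`. -/
def pd (φ : (ℤ → ℝ) → ℝ) (k : ℤ) (u : ℤ → ℝ) : ℝ :=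
  deriv (fun x => φ (Function.update u k x)) (u k)

/-- `φ` is a smooth function of the lattice variables `u_p, …, u_q` (q ≤ p):
it factors through a smooth function of the `p - q + 1` variables
`u_q, u_{q+1}, …, u_p`. -/
def SmoothWindow (q p : ℤ) (φ : (ℤ → ℝ) → ℝ) : Prop :=
  ∃ Φ : (Fin ((p - q).toNat + 1) → ℝ) → ℝ, ContDiff ℝ (⊤ : ℕ∞) Φ ∧
    ∀ u : ℤ → ℝ, φ u = Φ (fun i => u (q + (i.val : ℤ)))

theorem shift_shift (s t : ℤ) (u : ℤ → ℝ) : shift s (shift t u) = shift (s + t) u := by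
  funext j
  simp only [shift]
  congr 1
  ring

theorem shift_update (s k : ℤ) (u : ℤ → ℝ) (x : ℝ) :
    shift s (Function.update u k x) = Function.update (shift s u) (k - s) x := by
  funext j
  simp only [shift, Function.update_apply]
  have : j + s = k ↔ j = k - s := by omega
  simp only [this]

theorem SmoothWindow.congr {q p : ℤ} (hqp : q ≤ p) {φ : (ℤ → ℝ) → ℝ} (h : SmoothWindow q p φ)
    {u v : ℤ → ℝ} (huv : ∀ i, q ≤ i → i ≤ p → u i = v i) : φ u = φ v := by
  obtain ⟨Φ, -, hΦ⟩ := h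
  rw [hΦ, hΦ]
  congr 1
  funext i
  have := i.isLt
  apply huv <;> omega

theorem SmoothWindow.differentiable_update {q p : ℤ} {φ : (ℤ → ℝ) → ℝ} (h : SmoothWindow q p φ)
    (k : ℤ) (u : ℤ → ℝ) : Differentiable ℝ (fun x => φ (Function.update u k x)) := by
  obtain ⟨Φ, hc, hΦ⟩ := h
  simp only [hΦ]
  refine (hc.differentiable (by simp)).comp (differentiable_pi.2 fun i => ?_)
  simp only [Function.update_apply]
  split_ifs <;> fun_prop

theorem SmoothWindow.pd_eq_zero {q p : ℤ} (hqp : q ≤ p) {φ : (ℤ → ℝ) → ℝ}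
    (h : SmoothWindow q p φ) {k : ℤ} (hk : k < q ∨ p < k) (u : ℤ → ℝ) : pd φ k u = 0 := by
  have : (fun x => φ (Function.update u k x)) = fun _ => φ u := by
    funext x
    refine h.congr hqp fun i h1 h2 => ?_
    rw [Function.update_of_ne]
    omega
  simp [pd, this]

theorem SmoothWindow.hasDerivAt_update {q p : ℤ} {φ : (ℤ → ℝ) → ℝ} (h : SmoothWindow q p φ)
    (k : ℤ) (u : ℤ → ℝ) (x : ℝ) :
    HasDerivAt (fun x => φ (Function.update u k x)) (pd φ k (Function.update u k x)) x := by
  have := (h.differentiable_update k u x).hasDerivAt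
  simpa [pd] using this

/-- The partial derivatives of `κ + (T - 1) ω`, translated to site `0`. -/
theorem pd_shift_sub {q p : ℤ} {φ ω : (ℤ → ℝ) → ℝ} {κ : ℝ} (h : SmoothWindow q p ω)
    (hφ : ∀ u : ℤ → ℝ, φ u = κ + (ω (shift 1 u) - ω u)) (k : ℤ) (u : ℤ → ℝ) :
    pd φ k (shift (-k) u) = pd ω (k - 1) (shift (-(k - 1)) u) - pd ω k (shift (-k) u) := by
  set v := shift (-k) u with hv
  have hs : shift (-(k - 1)) u = shift 1 v := by
    rw [hv, shift_shift]
    congr 1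
    ring
  have e : (fun x => φ (Function.update v k x)) = fun x =>
      κ + (ω (Function.update (shift 1 v) (k - 1) x) - ω (Function.update v k x)) := by
    funext x
    rw [hφ, shift_update]
  have e1 : shift 1 v (k - 1) = v k := by simp [shift]
  rw [hs]
  simp only [pd, e, e1]
  rw [deriv_const_add, deriv_fun_sub (h.differentiable_update _ _ _)
    (h.differentiable_update _ _ _)]

theorem sum_Icc_telescope (a : ℤ → ℝ) (A : ℤ) (n : ℕ) :
    ∑ k ∈ Finset.Icc A (A + n), (a (k - 1) - a k) = a (A - 1) - a (A + n) := by
  induction n with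
  | zero => simp
  | succ n ih =>
    have : Finset.Icc A (A + (n + 1 : ℕ)) = insert (A + n + 1) (Finset.Icc A (A + n)) := by
      ext x
      simp only [Finset.mem_Icc, Finset.mem_insert]
      omega
    rw [this, Finset.sum_insert (by simp only [Finset.mem_Icc]; omega), ih]
    push_cast
    rw [add_sub_cancel_right, ← add_assoc]
    ring

/-- If the variational derivative of `φ` vanishes, then the sum of all translates of `φ` whose
window contains the site `m + n` does not depend on the variable at that site: its derivative in
this variable is a translate of the variational derivative. -/
theorem sum_shift_update {m : ℤ} {n : ℕ} {φ : (ℤ → ℝ) → ℝ} (h : SmoothWindow m (m + n) φ)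
    (h0 : ∀ u : ℤ → ℝ, ∑ k ∈ Finset.Icc m (m + n), pd φ k (shift (-k) u) = 0)
    (v : ℤ → ℝ) (x y : ℝ) :
    ∑ j ∈ Finset.range (n + 1), φ (shift j (Function.update v (m + n) x)) =
      ∑ j ∈ Finset.range (n + 1), φ (shift j (Function.update v (m + n) y)) := by
  have hd : ∀ x, HasDerivAt (fun x => ∑ j ∈ Finset.range (n + 1),
      φ (shift j (Function.update v (m + n) x))) 0 x := by
    intro x
    rw [← h0 (shift (m + n) (Function.update v (m + n) x))]
    have e : ∑ k ∈ Finset.Icc m (m + n),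
        pd φ k (shift (-k) (shift (m + n) (Function.update v (m + n) x))) =
        ∑ j ∈ Finset.range (n + 1),
          pd φ (m + n - j) (Function.update (shift j v) (m + n - j) x) := by
      refine Finset.sum_nbij' (fun k => (m + n - k).toNat) (fun j => m + n - j) ?_ ?_ ?_ ?_ ?_
      · intro k hk
        simp only [Finset.mem_Icc, Finset.mem_range] at *
        omega
      · intro k hk
        simp only [Finset.mem_Icc, Finset.mem_range] at *
        omega
      · intro k hk
        simp only [Finset.mem_Icc] at hk
        omega
      · intro k hk
        omega
      · intro k hk
        simp only [Finset.mem_Icc] at hk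
        have hc : (((m + n - k).toNat : ℕ) : ℤ) = m + n - k := by omega
        rw [hc, shift_shift, ← shift_update]
        congr 2 <;> ring
    rw [e]
    refine HasDerivAt.fun_sum fun j _ => ?_
    simp only [shift_update]
    exact h.hasDerivAt_update _ _ _
  exact is_const_of_deriv_eq_zero (fun x => (hd x).differentiableAt) (fun x => (hd x).deriv) x y

/-- The sequence that agrees with `u` at the sites left of `c` and is zero elsewhere. -/
def cut (c : ℤ) (u : ℤ → ℝ) : ℤ → ℝ := fun i => if i < c then u i else 0

theorem cut_succ (c : ℤ) (u : ℤ → ℝ) : cut (c + 1) u = Function.update (cut c u) c (u c) := by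
  funext i
  simp only [cut, Function.update_apply]
  rcases lt_trichotomy i c with h | rfl | h
  · simp [h, h.ne, h.trans (lt_add_one c)]
  · simp
  · simp [h.ne', not_lt.2 h.le, not_lt.2 (Int.add_one_le_of_lt h)]

theorem update_cut_zero (c : ℤ) (u : ℤ → ℝ) : Function.update (cut c u) c 0 = cut c u := by
  simp [cut]

theorem cut_shift_one (c : ℤ) (u : ℤ → ℝ) : cut c (shift 1 u) = shift 1 (cut (c + 1) u) := by
  funext i
  simp [cut, shift]

theorem smoothWindow_neg_sum_cut {m : ℤ} {n : ℕ} {φ : (ℤ → ℝ) → ℝ}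
    (h : SmoothWindow m (m + n) φ) :
    SmoothWindow m (m + n)
      (fun u => -∑ j ∈ Finset.range (n + 1), φ (shift j (cut (m + n) u))) := by
  obtain ⟨Φ, hc, hΦ⟩ := h
  refine ⟨fun x => -∑ j ∈ Finset.range (n + 1), Φ (fun i =>
    if hi : i.val + j < n then x ⟨i.val + j, by omega⟩ else 0), ?_, ?_⟩
  · refine ContDiff.neg (ContDiff.sum fun j _ => hc.comp (contDiff_pi.2 fun i => ?_))
    split_ifs
    · exact contDiff_apply ℝ ℝ _
    · exact contDiff_const
  · intro u
    simp only [hΦ]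
    congr 1
    refine Finset.sum_congr rfl fun j _ => ?_
    congr 1
    funext i
    simp only [shift, cut]
    by_cases hi : i.val + j < n
    · rw [dif_pos hi, if_pos (by omega)]
      congr 1
      push_cast
      ring
    · rw [dif_neg hi, if_neg (by omega)]

/-- the variational derivative `δφ/δu_0 = Σ_{k=m2}^{m1} T^{-k}(∂φ/∂u_k)`
of a smooth lattice function `φ` of `u_{m1},…,u_{m2}` vanishes identically iff
`φ = κ + (T-1)ω` for a constant `κ` and a smooth lattice function `ω` of finitely
many lattice variables. -/
theorem variational_derivative_kernel
    (m1 m2 : ℤ) (hm : m2 ≤ m1) (φ : (ℤ → ℝ) → ℝ) (hφ : SmoothWindow m2 m1 φ) :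
    (∀ u : ℤ → ℝ, ∑ k ∈ Finset.Icc m2 m1, pd φ k (shift (-k) u) = 0) ↔
      ∃ (κ : ℝ) (q p : ℤ) (ω : (ℤ → ℝ) → ℝ), q ≤ p ∧ SmoothWindow q p ω ∧
        ∀ u : ℤ → ℝ, φ u = κ + (ω (shift 1 u) - ω u) := by
  constructor
  · intro h0
    obtain ⟨n, rfl⟩ : ∃ n : ℕ, m1 = m2 + n := ⟨(m1 - m2).toNat, by omega⟩
    refine ⟨φ 0, m2, m2 + n, _, hm, smoothWindow_neg_sum_cut hφ, fun u => ?_⟩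
    set w := cut (m2 + n + 1) u with hw
    have hshift : ∀ j : ℕ, φ (shift j (cut (m2 + n) (shift 1 u))) = φ (shift (j + 1 : ℕ) w) := by
      intro j
      rw [cut_shift_one, shift_shift]
      simp [hw]
    have hind : ∑ j ∈ Finset.range (n + 1), φ (shift j (cut (m2 + n) u)) =
        ∑ j ∈ Finset.range (n + 1), φ (shift j w) := by
      rw [hw, cut_succ, ← sum_shift_update hφ h0 (cut (m2 + n) u) 0, update_cut_zero]
    have hfirst : φ (shift (0 : ℕ) w) = φ u := by
      refine hφ.congr hm fun i h1 h2 => ?_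
      simp only [shift, hw, cut]
      rw [if_pos (by omega)]
      simp
    have hlast : φ (shift (n + 1 : ℕ) w) = φ 0 := by
      refine hφ.congr hm fun i h1 h2 => ?_
      simp only [shift, hw, cut]
      rw [if_neg (by omega)]
      rfl
    have e1 := Finset.sum_range_succ (fun j : ℕ => φ (shift j w)) (n + 1)
    have e2 := Finset.sum_range_succ' (fun j : ℕ => φ (shift j w)) (n + 1)
    simp only [hshift, hind]
    linarith
  · rintro ⟨κ, q, p, ω, hqp, hω, h⟩ u
    -- The enlarged range has its end points outside the window of `ω`, so the boundary terms vanish.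
    have hsub : Finset.Icc m2 m1 ⊆ Finset.Icc (min m2 q) (max m1 (p + 1)) :=
      Finset.Icc_subset_Icc (min_le_left _ _) (le_max_left _ _)
    rw [Finset.sum_subset hsub fun k _ hk => hφ.pd_eq_zero hm
      (by simp only [Finset.mem_Icc] at hk; omega) _]
    simp only [pd_shift_sub hω h]
    obtain ⟨n, hn⟩ : ∃ n : ℕ, max m1 (p + 1) = min m2 q + n :=
      ⟨(max m1 (p + 1) - min m2 q).toNat, by omega⟩
    rw [hn, sum_Icc_telescope (fun k => pd ω k (shift (-k) u)),
      hω.pd_eq_zero hqp (by omega), hω.pd_eq_zero hqp (by omega), sub_zero]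
end
end

section
/- (Theorem 1) Let A : ℝ³ → ℝ be smooth and everywhere positive, and set a_n = A(u_{n+1},u_n,u_{n−1}). Then the following are equivalent: (i) there exists a function α : ℝ² → ℝ such that A(x,y,z) = α(x,y)·α(y,z) for all real x, y, z; (ii) ∂/∂u_0 ( a_1 a_{−1} / a_0 ) = 0 identically, i.e. the function (p,q,r,s,t) ↦ A(p,q,r)·A(r,s,t)/A(q,r,s) has everywhere vanishing partial derivative with respect to its middle variable r. Consequently, the Class I condition 'A(u_{n+1},u_n,u_{n−1}) ≠ α(u_{n+1},u_n)α(u_n,u_{n−1}) for every α' is equivalent to the criterion ∂/∂u_0 ( a_1 a_{−1} / a_0 ) ≠ 0. -/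
/-!
If `A x y z = α x y * α y z`, the quotient `A p q x * A x s t / A q x s` equals `α p q * α s t`
and does not depend on `x`. Conversely, let `f = log A`. The vanishing derivative makes the
quotient constant in `x`, which gives
`f p q r + f r s t - f q r s = f p q 0 + f 0 s t - f q 0 s` for all arguments
(`log_relation_of_deriv_eq_zero`). Finitely many instances of this linear relation yield
`f x y z = (f 0 x y - f 0 0 x) + (f 0 y z - f 0 0 y) + f 0 0 0`, so that
`α x y = A 0 x y / A 0 0 x * √(A 0 0 0)` factorizes `A`.
-/

open Finset

noncomputable section

/-- Constancy in `x` of `A p q x * A x s t / A q x s`, written between `x = r` and `x = 0`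
as an additive relation for `log A`. -/
lemma log_relation_of_deriv_eq_zero
    (A : ℝ → ℝ → ℝ → ℝ)
    (hA : ContDiff ℝ (⊤ : ℕ∞) fun p : ℝ × ℝ × ℝ => A p.1 p.2.1 p.2.2)
    (hApos : ∀ x y z : ℝ, 0 < A x y z)
    (h : ∀ p q r s t : ℝ, deriv (fun x => A p q x * A x s t / A q x s) r = 0)
    (p q r s t : ℝ) :
    Real.log (A p q r) + Real.log (A r s t) - Real.log (A q r s) =
      Real.log (A p q 0) + Real.log (A 0 s t) - Real.log (A q 0 s) := by
  have hd : Differentiable ℝ fun p : ℝ × ℝ × ℝ => A p.1 p.2.1 p.2.2 :=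
    hA.differentiable (by simp)
  have h1 : Differentiable ℝ fun x => A p q x :=
    hd.comp (g := fun p : ℝ × ℝ × ℝ => A p.1 p.2.1 p.2.2)
      (f := fun x : ℝ => (p, q, x)) (by fun_prop)
  have h2 : Differentiable ℝ fun x => A x s t :=
    hd.comp (g := fun p : ℝ × ℝ × ℝ => A p.1 p.2.1 p.2.2)
      (f := fun x : ℝ => (x, s, t)) (by fun_prop)
  have h3 : Differentiable ℝ fun x => A q x s :=
    hd.comp (g := fun p : ℝ × ℝ × ℝ => A p.1 p.2.1 p.2.2)
      (f := fun x : ℝ => (q, x, s)) (by fun_prop)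
  have hne : ∀ x y z, A x y z ≠ 0 := fun x y z => (hApos x y z).ne'
  have hc := is_const_of_deriv_eq_zero ((h1.mul h2).div h3 fun x => hne q x s)
    (fun x => h p q x s t) r 0
  have hlog := congrArg Real.log hc
  simpa [Real.log_div, Real.log_mul, hne] using hlog

/-- Theorem 1: for smooth positive `A`, the factorized form
`A(x,y,z) = α(x,y)α(y,z)` is equivalent to `∂/∂u_0 (a_1 a_{-1} / a_0) = 0`
identically; consequently the Class I condition (no such factorization)
is equivalent to the criterion `∂/∂u_0 (a_1 a_{-1} / a_0) ≠ 0`. -/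
theorem theorem1_classI_criterion
    (A : ℝ → ℝ → ℝ → ℝ)
    (hA : ContDiff ℝ (⊤ : ℕ∞) fun p : ℝ × ℝ × ℝ => A p.1 p.2.1 p.2.2)
    (hApos : ∀ x y z : ℝ, 0 < A x y z) :
    ((∃ α : ℝ → ℝ → ℝ, ∀ x y z : ℝ, A x y z = α x y * α y z) ↔
      (∀ p q r s t : ℝ, deriv (fun x => A p q x * A x s t / A q x s) r = 0)) ∧
    ((¬ ∃ α : ℝ → ℝ → ℝ, ∀ x y z : ℝ, A x y z = α x y * α y z) ↔
      (∃ p q r s t : ℝ, deriv (fun x => A p q x * A x s t / A q x s) r ≠ 0)) := by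
  have hne : ∀ x y z, A x y z ≠ 0 := fun x y z => (hApos x y z).ne'
  have main : (∃ α : ℝ → ℝ → ℝ, ∀ x y z : ℝ, A x y z = α x y * α y z) ↔
      (∀ p q r s t : ℝ, deriv (fun x => A p q x * A x s t / A q x s) r = 0) := by
    constructor
    · rintro ⟨α, hα⟩ p q r s t
      have hαne : ∀ x y, α x y ≠ 0 := fun x y h0 => hne x y 0 (by rw [hα, h0, zero_mul])
      have hconst : (fun x => A p q x * A x s t / A q x s) = fun _ => α p q * α s t := by
        funext x
        have := hαne q x
        have := hαne x s
        rw [hα, hα, hα]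
        field_simp
      rw [hconst, deriv_const]
    · intro h
      have K := log_relation_of_deriv_eq_zero A hA hApos h
      refine ⟨fun x y => A 0 x y / A 0 0 x * √(A 0 0 0), fun x y z => ?_⟩
      have hlog : Real.log (A x y z) =
          Real.log (A 0 x y * A 0 y z * A 0 0 0 / (A 0 0 x * A 0 0 y)) := by
        simp only [Real.log_div, Real.log_mul, hne, ne_eq, mul_eq_zero, or_self,
          not_false_eq_true]
        -- With `f = log A`: the first two instances split `f x 0 z` into a function of `x` plus
        -- one of `z`, the third expresses `f x y z` through it, the fourth exchanges `f y z 0`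
        -- for `f 0 y z`, and the last relates the remaining `f x 0 0`, `f 0 x 0` and `f 0 0 x`.
        linarith [K x 0 z 0 0, K 0 0 z 0 0, K 0 x y z 0, K 0 0 y z 0, K 0 0 x 0 0]
      have hA' : A x y z = A 0 x y * A 0 y z * A 0 0 0 / (A 0 0 x * A 0 0 y) := by
        refine Real.log_injOn_pos (hApos x y z) ?_ hlog
        have := hApos
        exact div_pos (mul_pos (mul_pos (this _ _ _) (this _ _ _)) (this _ _ _))
          (mul_pos (this _ _ _) (this _ _ _))
      rw [hA']
      have hs : √(A 0 0 0) * √(A 0 0 0) = A 0 0 0 := Real.mul_self_sqrt (hApos 0 0 0).le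
      calc _ = A 0 x y / A 0 0 x * (A 0 y z / A 0 0 y) * A 0 0 0 := by
            rw [div_mul_div_comm, div_mul_eq_mul_div]
        _ = _ := by linear_combination (-(A 0 x y / A 0 0 x * (A 0 y z / A 0 0 y))) * hs
  exact ⟨main, by rw [main]; push Not; rfl⟩
end
end

section
/- (Theorem 4) Consider the differential-difference equation u̇_n = f_n with f_n = a_n u_{n+2} + b_n u_{n−2} + c_n, where a_n = A(u_{n+1},u_n,u_{n−1}), b_n = B(u_{n+1},u_n,u_{n−1}), c_n = C(u_{n+1},u_n,u_{n−1}), the functions A, B : ℝ³ → ℝ are smooth and nowhere zero and C : ℝ³ → ℝ is smooth. For a smooth function φ of finitely many lattice variables define D_t φ = Σ_k f_k · ∂φ/∂u_k (a finite sum over the variables on which φ depends). Suppose that the four integrability conditions ∂/∂u_0 [ D_t(a_{−2}a_0a_2) / (a_{−2}a_0a_2) ] = 0, ∂/∂u_0 [ D_t(a_{−3}a_{−1}a_1a_3) / (a_{−3}a_{−1}a_1a_3) ] = 0, ∂/∂u_0 [ D_t(b_{−2}b_0b_2) / (b_{−2}b_0b_2) ] = 0 and ∂/∂u_0 [ D_t(b_{−3}b_{−1}b_1b_3)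 / (b_{−3}b_{−1}b_1b_3) ] = 0 hold identically in the lattice variables. Then there exist functions A1, A2, B1, B2 : ℝ² → ℝ such that A(x,y,z) = A1(x,y)·A2(y,z) and B(x,y,z) = B1(x,y)·B2(y,z) for all real x, y, z. -/
/-!
The two four-factor conditions alone suffice. Let `F` be `A` or `B`, and let
`ψ = D_t(F_{-3}F_{-1}F_1F_3) / (F_{-3}F_{-1}F_1F_3)`, which the condition makes independent
of `u_0`. Expanding `ψ` through the logarithmic derivatives `F_x/F`, `F_y/F`, `F_z/F`, with
`u_4, …, u_0 = t, x, y, z, s`, the only part in which `s` interacts with `t` or `x` is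
`(A(x,y,z) t + B(x,y,z) s + C(x,y,z)) ((F_z/F)(t,x,y) + (F_x/F)(y,z,s))
  + x A(y,z,s) (F_y/F)(y,z,s)` (`key_identity`).

Mixed differences in `s` and `t` show that `F_x/F` is affine in its third argument and `F_z/F`
in its first. As both come from `log |F|`, the two slopes agree and are a function `g` of the
middle variable alone (`slopes_eq`), i.e. `∂_x∂_z log |F| (x,y,z) = g y`, and moreover
`B(x,y,z) g(x) + A(x,y,z) g(z) = 0`. Hence `g` vanishes identically or nowhere.
If `g = 0`, then `F` factorizes. Otherwise the second difference in `s` of the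
expression above at `t = 0` shows that `B` is affine in its first argument; having no zero, it
does not depend on it. Then `B` factorizes trivially and `A(x,y,z) = -B(0,y,z) g(x)/g(z)`
does as well (`dichotomy`).
-/

open Finset

noncomputable section

/-- `coefFn A n u = A(u_{n+1}, u_n, u_{n-1})`, i.e. `a_n` (resp. `b_n`, `c_n`). -/
def coefFn (A : ℝ → ℝ → ℝ → ℝ) (n : ℤ) (u : ℤ → ℝ) : ℝ :=
  A (u (n + 1)) (u n) (u (n - 1))

/-- The right-hand side `f_n = a_n u_{n+2} + b_n u_{n-2} + c_n`. -/
def rhsF (A B C : ℝ → ℝ → ℝ → ℝ) (n : ℤ) (u : ℤ → ℝ) : ℝ :=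
  coefFn A n u * u (n + 2) + coefFn B n u * u (n - 2) + coefFn C n u

/-- `D_t φ = Σ_k f_k ∂φ/∂u_k`: the sum is finite since `pd φ k = 0` for every
variable `u_k` on which `φ` does not depend; for lattice functions depending
only on the variables `u_{-6},…,u_6` the range `[-6,6]` captures the full sum. -/
def Dt (A B C : ℝ → ℝ → ℝ → ℝ) (φ : (ℤ → ℝ) → ℝ) (u : ℤ → ℝ) : ℝ :=
  ∑ k ∈ Finset.Icc (-6 : ℤ) 6, rhsF A B C k u * pd φ k u

/-- The logarithmic derivative `F_x / F` in the first argument. -/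
def logX (F : ℝ → ℝ → ℝ → ℝ) (x y z : ℝ) : ℝ := deriv (fun w => F w y z) x / F x y z

/-- The logarithmic derivative `F_y / F` in the second argument. -/
def logY (F : ℝ → ℝ → ℝ → ℝ) (x y z : ℝ) : ℝ := deriv (fun w => F x w z) y / F x y z

/-- The logarithmic derivative `F_z / F` in the third argument. -/
def logZ (F : ℝ → ℝ → ℝ → ℝ) (x y z : ℝ) : ℝ := deriv (fun w => F x y w) z / F x y z

/-- Joint smoothness of a function of three real variables in curried form. -/
def Smooth3 (F : ℝ → ℝ → ℝ → ℝ) : Prop :=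
  ContDiff ℝ (⊤ : ℕ∞) fun p : ℝ × ℝ × ℝ => F p.1 p.2.1 p.2.2

lemma Smooth3.comp {F : ℝ → ℝ → ℝ → ℝ} (hF : Smooth3 F) {a b c : ℝ → ℝ}
    (ha : Differentiable ℝ a) (hb : Differentiable ℝ b) (hc : Differentiable ℝ c) :
    Differentiable ℝ fun s => F (a s) (b s) (c s) := by
  have h : Differentiable ℝ fun p : ℝ × ℝ × ℝ => F p.1 p.2.1 p.2.2 :=
    ContDiff.differentiable hF (by simp)
  exact h.comp (ha.prodMk (hb.prodMk hc))

/-- Directional derivatives of a smooth function are smooth. -/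
lemma smooth_dir {F : ℝ → ℝ → ℝ → ℝ} (hF : Smooth3 F) (e : ℝ × ℝ × ℝ) :
    ContDiff ℝ (⊤ : ℕ∞) fun p : ℝ × ℝ × ℝ =>
      fderiv ℝ (fun p : ℝ × ℝ × ℝ => F p.1 p.2.1 p.2.2) p e :=
  (ContDiff.fderiv_right (m := (⊤ : ℕ∞)) hF (by simp)).clm_apply contDiff_const

lemma fderiv_dir {F : ℝ → ℝ → ℝ → ℝ} (hF : Smooth3 F) (p e : ℝ × ℝ × ℝ) {c : ℝ → ℝ × ℝ × ℝ}
    {t : ℝ} (hc : HasDerivAt c e t) (hp : c t = p) :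
    deriv (fun w => F (c w).1 (c w).2.1 (c w).2.2) t =
      fderiv ℝ (fun p : ℝ × ℝ × ℝ => F p.1 p.2.1 p.2.2) p e := by
  subst hp
  have h : DifferentiableAt ℝ (fun p : ℝ × ℝ × ℝ => F p.1 p.2.1 p.2.2) (c t) :=
    ContDiff.differentiable hF (by simp) _
  exact (h.hasFDerivAt.comp_hasDerivAt t hc).deriv

lemma smooth_dx {F : ℝ → ℝ → ℝ → ℝ} (hF : Smooth3 F) :
    Smooth3 fun x y z => deriv (fun w => F w y z) x := by
  unfold Smooth3
  convert smooth_dir hF (1, 0, 0) using 2 with p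
  exact fderiv_dir hF p (1, 0, 0) (c := fun w => (w, p.2.1, p.2.2))
    ((hasDerivAt_id _).prodMk ((hasDerivAt_const _ _).prodMk (hasDerivAt_const _ _))) rfl

lemma smooth_dy {F : ℝ → ℝ → ℝ → ℝ} (hF : Smooth3 F) :
    Smooth3 fun x y z => deriv (fun w => F x w z) y := by
  unfold Smooth3
  convert smooth_dir hF (0, 1, 0) using 2 with p
  exact fderiv_dir hF p (0, 1, 0) (c := fun w => (p.1, w, p.2.2))
    ((hasDerivAt_const _ _).prodMk ((hasDerivAt_id _).prodMk (hasDerivAt_const _ _))) rfl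

lemma smooth_dz {F : ℝ → ℝ → ℝ → ℝ} (hF : Smooth3 F) :
    Smooth3 fun x y z => deriv (fun w => F x y w) z := by
  unfold Smooth3
  convert smooth_dir hF (0, 0, 1) using 2 with p
  exact fderiv_dir hF p (0, 0, 1) (c := fun w => (p.1, p.2.1, w))
    ((hasDerivAt_const _ _).prodMk ((hasDerivAt_const _ _).prodMk (hasDerivAt_id _))) rfl

lemma smooth_logX {F : ℝ → ℝ → ℝ → ℝ} (hF : Smooth3 F) (h : ∀ x y z, F x y z ≠ 0) :
    Smooth3 (logX F) := ContDiff.div (smooth_dx hF) hF fun _ => h _ _ _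

lemma smooth_logY {F : ℝ → ℝ → ℝ → ℝ} (hF : Smooth3 F) (h : ∀ x y z, F x y z ≠ 0) :
    Smooth3 (logY F) := ContDiff.div (smooth_dy hF) hF fun _ => h _ _ _

lemma smooth_logZ {F : ℝ → ℝ → ℝ → ℝ} (hF : Smooth3 F) (h : ∀ x y z, F x y z ≠ 0) :
    Smooth3 (logZ F) := ContDiff.div (smooth_dz hF) hF fun _ => h _ _ _

lemma differentiable_update (u : ℤ → ℝ) (k i : ℤ) :
    Differentiable ℝ fun s => Function.update u k s i := by
  by_cases h : i = k
  · subst h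
    simp only [Function.update_self]
    exact differentiable_id
  · simp only [Function.update_of_ne h]
    exact differentiable_const _

lemma differentiable_coefFn {F : ℝ → ℝ → ℝ → ℝ} (hF : Smooth3 F) (u : ℤ → ℝ) (j k : ℤ) :
    Differentiable ℝ fun s => coefFn F j (Function.update u k s) :=
  hF.comp (differentiable_update _ _ _) (differentiable_update _ _ _)
    (differentiable_update _ _ _)

/-- The logarithmic derivative of `T^j F` with respect to `u_k`. -/
def logPd (F : ℝ → ℝ → ℝ → ℝ) (j k : ℤ) (v : ℤ → ℝ) : ℝ :=
  if k = j + 1 then coefFn (logX F) j v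
  else if k = j then coefFn (logY F) j v
  else if k = j - 1 then coefFn (logZ F) j v
  else 0

lemma logPd_eq (F : ℝ → ℝ → ℝ → ℝ) (j k : ℤ) (v : ℤ → ℝ) :
    logDeriv (fun x => coefFn F j (Function.update v k x)) (v k) = logPd F j k v := by
  have e2 : j - 1 ≠ j + 1 := by omega
  have e5 : j + 1 ≠ j - 1 := by omega
  have e6 : j ≠ j - 1 := by omega
  unfold logPd
  rw [logDeriv_apply]
  split_ifs with h1 h2 h3
  · subst h1
    simp [coefFn, logX, Function.update_of_ne e2]
  · subst h2
    simp [coefFn, logY]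
  · subst h3
    simp [coefFn, logZ, Function.update_of_ne e5, Function.update_of_ne e6]
  · simp [coefFn, Function.update_of_ne (Ne.symm h1), Function.update_of_ne (Ne.symm h2),
      Function.update_of_ne (Ne.symm h3)]

lemma differentiable_logPd {F : ℝ → ℝ → ℝ → ℝ} (hF : Smooth3 F) (h : ∀ x y z, F x y z ≠ 0)
    (u : ℤ → ℝ) (j k l : ℤ) :
    Differentiable ℝ fun s => logPd F j k (Function.update u l s) := by
  unfold logPd
  split_ifs
  · exact differentiable_coefFn (smooth_logX hF h) _ _ _
  · exact differentiable_coefFn (smooth_logY hF h) _ _ _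
  · exact differentiable_coefFn (smooth_logZ hF h) _ _ _
  · exact differentiable_const _

/-- `D_t(F_{-3}F_{-1}F_1F_3) / (F_{-3}F_{-1}F_1F_3)` is the sum of the `D_t log |F_j|`. -/
lemma Dt_div (A B C F : ℝ → ℝ → ℝ → ℝ) (hF : Smooth3 F) (h : ∀ x y z, F x y z ≠ 0)
    (v : ℤ → ℝ) :
    Dt A B C (fun w => coefFn F (-3) w * coefFn F (-1) w * coefFn F 1 w * coefFn F 3 w) v /
      (coefFn F (-3) v * coefFn F (-1) v * coefFn F 1 v * coefFn F 3 v) =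
    ∑ k ∈ Finset.Icc (-6 : ℤ) 6, rhsF A B C k v *
      (logPd F (-3) k v + logPd F (-1) k v + logPd F 1 k v + logPd F 3 k v) := by
  unfold Dt
  rw [Finset.sum_div]
  refine Finset.sum_congr rfl fun k _ => ?_
  rw [mul_div_assoc]
  congr 1
  let p : ℤ → ℝ → ℝ := fun j x => coefFn F j (Function.update v k x)
  have hd : ∀ j, DifferentiableAt ℝ (p j) (v k) := fun j => differentiable_coefFn hF v j k (v k)
  have hn : ∀ j, p j (v k) ≠ 0 := fun j => h _ _ _
  have hm : ∀ q r : ℝ → ℝ, q (v k) ≠ 0 → r (v k) ≠ 0 → DifferentiableAt ℝ q (v k) →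
      DifferentiableAt ℝ r (v k) →
      logDeriv (q * r) (v k) = logDeriv q (v k) + logDeriv r (v k) :=
    fun q r h1 h2 h3 h4 => logDeriv_mul (f := q) (g := r) _ h1 h2 h3 h4
  have e : logDeriv (p (-3) * p (-1) * p 1 * p 3) (v k) =
      logDeriv (p (-3)) (v k) + logDeriv (p (-1)) (v k) + logDeriv (p 1) (v k)
        + logDeriv (p 3) (v k) := by
    have h1 := (hd (-3)).mul (hd (-1))
    have n1 : (p (-3) * p (-1)) (v k) ≠ 0 := mul_ne_zero (hn _) (hn _)
    have n2 : (p (-3) * p (-1) * p 1) (v k) ≠ 0 := mul_ne_zero n1 (hn _)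
    rw [hm _ _ n2 (hn 3) (h1.mul (hd 1)) (hd 3), hm _ _ n1 (hn 1) h1 (hd 1),
      hm _ _ (hn (-3)) (hn (-1)) (hd (-3)) (hd (-1))]
  simp only [← logPd_eq]
  refine Eq.trans ?_ e
  simp only [logDeriv_apply, pd, Pi.mul_apply, p, Function.update_eq_self]
  rfl

/-- The sequence with `u_4, …, u_0 = t, x, y, z, s` and zeros elsewhere. -/
def seq5 (t x y z s : ℝ) : ℤ → ℝ := fun k =>
  if k = 4 then t else if k = 3 then x else if k = 2 then y else if k = 1 then z else
    if k = 0 then s else 0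

/-- The integrability condition, with everything that does not couple `s = u_0` to
`x = u_3` or `t = u_4` collected in `R` and `P`. -/
lemma key_identity (A B C F : ℝ → ℝ → ℝ → ℝ) (hA : Smooth3 A) (hB : Smooth3 B) (hC : Smooth3 C)
    (hF : Smooth3 F) (hne : ∀ x y z, F x y z ≠ 0)
    (hcond : ∀ u : ℤ → ℝ, pd (fun v =>
        Dt A B C (fun w => coefFn F (-3) w * coefFn F (-1) w * coefFn F 1 w * coefFn F 3 w) v /
          (coefFn F (-3) v * coefFn F (-1) v * coefFn F 1 v * coefFn F 3 v)) 0 u = 0) :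
    ∃ (P : ℝ → ℝ → ℝ → ℝ → ℝ) (R : ℝ → ℝ → ℝ → ℝ), ∀ t x y z s,
      (A x y z * t + B x y z * s + C x y z) * (logZ F t x y + logX F y z s)
        + x * (A y z s * logY F y z s) + R y z s = P t x y z := by
  simp only [Dt_div A B C F hF hne] at hcond
  set Ψ : (ℤ → ℝ) → ℝ := fun v => ∑ k ∈ Finset.Icc (-6 : ℤ) 6, rhsF A B C k v *
      (logPd F (-3) k v + logPd F (-1) k v + logPd F 1 k v + logPd F 3 k v) with hΨ
  have hdiff : ∀ u : ℤ → ℝ, Differentiable ℝ fun s => Ψ (Function.update u 0 s) := by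
    intro u
    refine Differentiable.fun_sum fun k _ => ?_
    refine Differentiable.mul ?_ ?_
    · exact ((((differentiable_coefFn hA u k 0).mul (differentiable_update u 0 (k + 2))).add
        ((differentiable_coefFn hB u k 0).mul (differentiable_update u 0 (k - 2)))).add
        (differentiable_coefFn hC u k 0))
    · exact (((differentiable_logPd hF hne u _ k 0).add (differentiable_logPd hF hne u _ k 0)).add
        (differentiable_logPd hF hne u _ k 0)).add (differentiable_logPd hF hne u _ k 0)
  have hconst : ∀ (u : ℤ → ℝ) (s s' : ℝ),
      Ψ (Function.update u 0 s) = Ψ (Function.update u 0 s') := by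
    intro u s s'
    refine is_const_of_deriv_eq_zero (hdiff u) (fun r => ?_) s s'
    have := hcond (Function.update u 0 r)
    simpa [pd] using this
  have hseq : ∀ t x y z s, Ψ (seq5 t x y z s) = Ψ (seq5 t x y z 0) := by
    intro t x y z s
    have e : ∀ s, Function.update (seq5 t x y z 0) 0 s = seq5 t x y z s := by
      intro s
      funext k
      by_cases hk : k = 0
      · subst hk; simp [seq5]
      · simp [seq5, hk]
    have := hconst (seq5 t x y z 0) s 0
    rwa [e, e] at this
  have hI : Finset.Icc (-6 : ℤ) 6 = {-6, -5, -4, -3, -2, -1, 0, 1, 2, 3, 4, 5, 6} := by decide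
  refine ⟨fun t x y z => Ψ (seq5 t x y z 0)
      - ((B 0 t x * y + C 0 t x) * logX F t x y + (B t x y * z + C t x y) * logY F t x y),
    fun y z s => C y z s * logY F y z s
      + (A z s 0 * y + C z s 0) * (logZ F y z s + logX F s 0 0)
      + (A s 0 0 * z + C s 0 0) * logY F s 0 0
      + (A 0 0 0 * s + C 0 0 0) * (logZ F s 0 0 + logX F 0 0 0)
      + C 0 0 0 * (logY F 0 0 0 + logZ F 0 0 0), fun t x y z s => ?_⟩
  beta_reduce
  rw [← hseq t x y z s, hΨ]
  simp [hI, logPd, rhsF, coefFn, seq5]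
  ring

/-- If `M` vanishes on the axis `x = 0`, with `∂_x M = z G(x)` and `∂_z M = x K(z)`, then
`M = g x z`, so `G` and `K` are the same constant. -/
lemma slopes_eq (M : ℝ → ℝ → ℝ) (G K : ℝ → ℝ)
    (hx : ∀ x z, HasDerivAt (fun w => M w z) (z * G x) x)
    (hz : ∀ x z, HasDerivAt (fun w => M x w) (x * K z) z)
    (h0 : ∀ z, M 0 z = 0) : ∃ g, (∀ x, G x = g) ∧ ∀ z, K z = g := by
  have hlin : ∀ x z, M x z = z * M x 1 := by
    intro x z
    have hd : ∀ x, HasDerivAt (fun w => M w z - z * M w 1) (z * G x - z * (1 * G x)) x :=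
      fun x => (hx x z).sub ((hx x 1).const_mul z)
    have := is_const_of_deriv_eq_zero (fun x => (hd x).differentiableAt)
      (fun x => by rw [(hd x).deriv]; ring) x 0
    simp only [h0] at this
    linarith
  have hK : ∀ x z, x * K z = M x 1 := by
    intro x z
    have h1 := hz x z
    have h2 : HasDerivAt (fun w => M x w) (1 * M x 1) z := by
      rw [show (fun w => M x w) = fun w => w * M x 1 from funext (hlin x)]
      exact (hasDerivAt_id z).mul_const _
    rw [h1.unique h2, one_mul]
  refine ⟨K 0, fun x => ?_, fun z => ?_⟩
  · have h2 : HasDerivAt (fun w => M w 1) (1 * K 0) x := by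
      rw [show (fun w => M w 1) = fun w => w * K 0 from funext fun w => (hK w 0).symm]
      exact (hasDerivAt_id x).mul_const _
    have := (hx x 1).unique h2
    linarith
  · have := hK 1 z
    have := hK 1 0
    linarith

lemma hasDerivAt_logX {F : ℝ → ℝ → ℝ → ℝ} (hF : Smooth3 F) (hne : ∀ x y z, F x y z ≠ 0)
    (x y z : ℝ) : HasDerivAt (fun w => Real.log (F w y z)) (logX F x y z) x :=
  ((hF.comp differentiable_id (differentiable_const y) (differentiable_const z)) x).hasDerivAt.log
    (hne _ _ _)

lemma hasDerivAt_logZ {F : ℝ → ℝ → ℝ → ℝ} (hF : Smooth3 F) (hne : ∀ x y z, F x y z ≠ 0)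
    (x y z : ℝ) : HasDerivAt (fun w => Real.log (F x y w)) (logZ F x y z) z :=
  ((hF.comp (differentiable_const x) (differentiable_const y) differentiable_id) z).hasDerivAt.log
    (hne _ _ _)

/-- If `F_x / F` does not depend on `z`, then `F` factorizes: `F(x,y,z) / F(x,y,0)` has zero
derivative in `x`. -/
lemma factor_of_logX {F : ℝ → ℝ → ℝ → ℝ} (hF : Smooth3 F) (hne : ∀ x y z, F x y z ≠ 0)
    (h : ∀ x y z, logX F x y z = logX F x y 0) (x y z : ℝ) :
    F x y z = F x y 0 * (F 0 y z / F 0 y 0) := by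
  have hd : ∀ z x, HasDerivAt (fun w => F w y z) (deriv (fun w => F w y z) x) x := fun z x =>
    ((hF.comp differentiable_id (differentiable_const y) (differentiable_const z)) x).hasDerivAt
  have hq := fun x => (hd z x).div (hd 0 x) (hne x y 0)
  have := is_const_of_deriv_eq_zero (fun x => (hq x).differentiableAt)
    (fun x => by
      rw [(hq x).deriv]
      have := h x y z
      unfold logX at this
      rw [div_eq_div_iff (hne _ _ _) (hne _ _ _)] at this
      rw [this, mul_comm, sub_eq_zero.2 (by ring), zero_div]) x 0
  simp only [Pi.div_apply] at this
  rw [← this]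
  field_simp [hne x y 0]

/-- Either `F` factorizes, or `∂_x∂_z log |F| = g y` with `g` nowhere zero,
`B(x,y,z) g(x) + A(x,y,z) g(z) = 0`, and `B` is independent of its first argument. -/
lemma dichotomy (A B C F : ℝ → ℝ → ℝ → ℝ) (hA : Smooth3 A) (hB : Smooth3 B) (hC : Smooth3 C)
    (hAne : ∀ x y z, A x y z ≠ 0) (hBne : ∀ x y z, B x y z ≠ 0)
    (hF : Smooth3 F) (hne : ∀ x y z, F x y z ≠ 0)
    (hcond : ∀ u : ℤ → ℝ, pd (fun v =>
        Dt A B C (fun w => coefFn F (-3) w * coefFn F (-1) w * coefFn F 1 w * coefFn F 3 w) v /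
          (coefFn F (-3) v * coefFn F (-1) v * coefFn F 1 v * coefFn F 3 v)) 0 u = 0) :
    (∀ x y z, F x y z = F x y 0 * (F 0 y z / F 0 y 0)) ∨
    ∃ g : ℝ → ℝ, (∀ x, g x ≠ 0) ∧ (∀ x y z, B x y z * g x + A x y z * g z = 0) ∧
      ∀ x y z, B x y z = B 0 y z := by
  obtain ⟨P, R, key⟩ := key_identity A B C F hA hB hC hF hne hcond
  have hmix : ∀ t s x y z, B x y z * s * (logZ F t x y - logZ F 0 x y)
      + A x y z * t * (logX F y z s - logX F y z 0) = 0 := by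
    intro t s x y z
    linear_combination key t x y z s - key t x y z 0 - key 0 x y z s + key 0 x y z 0
  set G : ℝ → ℝ → ℝ := fun x y => logX F x y 1 - logX F x y 0 with hG
  set K : ℝ → ℝ → ℝ := fun y z => logZ F 1 y z - logZ F 0 y z with hK
  have hBA : ∀ x y z, B x y z * K x y + A x y z * G y z = 0 := by
    intro x y z
    linear_combination hmix 1 1 x y z
  have hX : ∀ x y z, logX F x y z - logX F x y 0 = z * G x y := by
    intro x y z
    apply mul_left_cancel₀ (hAne 0 x y)
    linear_combination hmix 1 z 0 x y - z * hBA 0 x y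
  have hZ : ∀ x y z, logZ F x y z - logZ F 0 y z = x * K y z := by
    intro x y z
    apply mul_left_cancel₀ (hBne y z 0)
    linear_combination hmix x 1 y z 0 - x * hBA y z 0
  have hex : ∀ y, ∃ g, (∀ x, G x y = g) ∧ ∀ z, K y z = g := by
    intro y
    refine slopes_eq (fun x z => Real.log (F x y z) - Real.log (F x y 0)
      - (Real.log (F 0 y z) - Real.log (F 0 y 0))) (fun x => G x y) (K y) ?_ ?_ ?_
    · intro x z
      rw [← hX]
      exact ((hasDerivAt_logX hF hne x y z).sub (hasDerivAt_logX hF hne x y 0)).sub_const _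
    · intro x z
      rw [← hZ]
      exact ((hasDerivAt_logZ hF hne x y z).sub_const _).sub
        ((hasDerivAt_logZ hF hne 0 y z).sub_const _)
    · intro z
      ring
  choose g hgG hgK using hex
  simp only [hgG, hgK] at hBA hX hZ
  by_cases h0 : ∀ y, g y = 0
  · left
    refine factor_of_logX hF hne fun x y z => ?_
    have := hX x y z
    rw [h0, mul_zero] at this
    linarith
  right
  push Not at h0
  obtain ⟨y0, hy0⟩ := h0
  have hg : ∀ x, g x ≠ 0 := by
    intro x hx
    have := hBA x 0 y0
    rw [hx, mul_zero, zero_add] at this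
    exact (mul_ne_zero (hAne _ _ _) hy0) this
  refine ⟨g, hg, hBA, fun x y z => ?_⟩
  -- second difference in `s` at `t = 0`: `B` is affine in its first argument
  obtain ⟨m, n, hmn⟩ : ∃ m n, ∀ w, B w y z = m * w + n := by
    refine ⟨-(A y z 1 * logY F y z 1 + A y z (-1) * logY F y z (-1)
        - 2 * (A y z 0 * logY F y z 0)) / (2 * g z),
      -(R y z 1 + R y z (-1) - 2 * R y z 0) / (2 * g z), fun w => ?_⟩
    have hgz := hg z
    field_simp
    linear_combination key 0 w y z 1 + key 0 w y z (-1) - 2 * key 0 w y z 0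
      - (B w y z + C w y z) * hX y z 1 - (-B w y z + C w y z) * hX y z (-1)
  -- an affine function without a zero is constant
  have hm : m = 0 := by
    by_contra hm
    apply hBne (-n / m) y z
    rw [hmn]
    field_simp
    ring
  rw [hmn, hmn 0, hm]
  ring

/-- Theorem 4: the four integrability conditions force the
coefficients `A` and `B` to factorize as `A1(x,y)A2(y,z)` and `B1(x,y)B2(y,z)`. -/
theorem theorem4_coefficients_factorize
    (A B C : ℝ → ℝ → ℝ → ℝ)
    (hA : ContDiff ℝ (⊤ : ℕ∞) fun p : ℝ × ℝ × ℝ => A p.1 p.2.1 p.2.2)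
    (hB : ContDiff ℝ (⊤ : ℕ∞) fun p : ℝ × ℝ × ℝ => B p.1 p.2.1 p.2.2)
    (hC : ContDiff ℝ (⊤ : ℕ∞) fun p : ℝ × ℝ × ℝ => C p.1 p.2.1 p.2.2)
    (hAne : ∀ x y z : ℝ, A x y z ≠ 0)
    (hBne : ∀ x y z : ℝ, B x y z ≠ 0)
    (h1 : ∀ u : ℤ → ℝ, pd (fun v =>
        Dt A B C (fun w => coefFn A (-2) w * coefFn A 0 w * coefFn A 2 w) v /
          (coefFn A (-2) v * coefFn A 0 v * coefFn A 2 v)) 0 u = 0)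
    (h2 : ∀ u : ℤ → ℝ, pd (fun v =>
        Dt A B C (fun w => coefFn A (-3) w * coefFn A (-1) w * coefFn A 1 w * coefFn A 3 w) v /
          (coefFn A (-3) v * coefFn A (-1) v * coefFn A 1 v * coefFn A 3 v)) 0 u = 0)
    (h3 : ∀ u : ℤ → ℝ, pd (fun v =>
        Dt A B C (fun w => coefFn B (-2) w * coefFn B 0 w * coefFn B 2 w) v /
          (coefFn B (-2) v * coefFn B 0 v * coefFn B 2 v)) 0 u = 0)
    (h4 : ∀ u : ℤ → ℝ, pd (fun v =>
        Dt A B C (fun w => coefFn B (-3) w * coefFn B (-1) w * coefFn B 1 w * coefFn B 3 w) v /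
          (coefFn B (-3) v * coefFn B (-1) v * coefFn B 1 v * coefFn B 3 v)) 0 u = 0) :
    ∃ A1 A2 B1 B2 : ℝ → ℝ → ℝ,
      (∀ x y z : ℝ, A x y z = A1 x y * A2 y z) ∧
      (∀ x y z : ℝ, B x y z = B1 x y * B2 y z) := by
  rcases dichotomy A B C B hA hB hC hAne hBne hB hBne h4 with hBf | ⟨-, -, -, hBx⟩
  all_goals
    rcases dichotomy A B C A hA hB hC hAne hBne hA hAne h2 with hAf | ⟨g, hg, hBA, hBx'⟩
  · exact ⟨_, _, _, _, hAf, hBf⟩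
  · refine ⟨fun x _ => g x, fun y z => -B 0 y z / g z, _, _, fun x y z => ?_, hBf⟩
    have := hBA x y z
    rw [hBx' x y z] at this
    have := hg z
    field_simp
    linarith
  · exact ⟨_, _, fun _ _ => 1, fun y z => B 0 y z, hAf, fun x y z => by rw [hBx, one_mul]⟩
  · refine ⟨fun x _ => g x, fun y z => -B 0 y z / g z, fun _ _ => 1, fun y z => B 0 y z,
      fun x y z => ?_, fun x y z => by rw [hBx, one_mul]⟩
    have := hBA x y z
    rw [hBx' x y z] at this
    have := hg z
    field_simp
    linarith
end
end

section
/- (Theorem 5) Consider the differential-difference equation u̇_n = f_n with f_n = a_n u_{n+2} + b_n u_{n−2} + c_n, where a_n = A(u_{n+1},u_n,u_{n−1}), b_n = B(u_{n+1},u_n,u_{n−1}), c_n = C(u_{n+1},u_n,u_{n−1}), A, B smooth and nowhere zero, C smooth. Assume: (i) the four integrability conditions ∂/∂u_0 [ D_t(a_{−2}a_0a_2)/(a_{−2}a_0a_2) ] = 0, ∂/∂u_0 [ D_t(a_{−3}a_{−1}a_1a_3)/(a_{−3}a_{−1}a_1a_3) ] = 0, ∂/∂u_0 [ D_t(b_{−2}b_0b_2)/(b_{−2}b_0b_2)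 ] = 0, ∂/∂u_0 [ D_t(b_{−3}b_{−1}b_1b_3)/(b_{−3}b_{−1}b_1b_3) ] = 0 hold identically; (ii) the Class I conditions hold, i.e. neither ∂/∂u_0 ( a_1 a_{−1}/a_0 ) nor ∂/∂u_0 ( b_1 b_{−1}/b_0 ) vanishes identically; (iii) A(x,y,z) = A1(x,y)·A2(y,z) and B(x,y,z) = B1(x,y)·B2(y,z) with A1, A2, B1, B2 smooth. Then ∂²A2(y,z)/∂z² = 0 and ∂²B1(x,y)/∂x² = 0 identically, i.e. A2 is affine in its second argument and B1 is affine in its first argument. -/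
/-!
Write `A(x,y,z) = A1(x,y) A2(y,z)` and let `γ = log |A1|`, `δ = log |A2|`. The first integrability condition says
that `D_t log |a_{-2} a_0 a_2|` does not depend on `u_0`. Isolating the terms which involve both
`u_0` and `u_3`, or both `u_0` and `u_{-3}` (mixed second differences, `mixed_differences`), shows
that for fixed `x`, `y` the functions `A(x,y,z) (∂₂γ(x,y) + ∂₁δ(y,z))` and
`A(x,y,z) (∂₂δ(x,y) + ∂₁γ(y,z))` are affine in `z`.

Suppose `A2(y₀, ·)` is not affine, so that some second difference `W(y)` of `A2(y, ·)` has
`W(y₀) ≠ 0`. The first relation says that `A1(x,y) W(y)` is constant in `y`; hence `W` has no zero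
and `A1(x,y) = P(x) N(y)`. The second relation then forces `A2(x,y) P(y)` to be constant in `y`, and
both together give `A(x,y,z) = c P(x) / P(z)` (`affine_or_ratio`). For such an `A` the quantity
`a_1 a_{-1} / a_0` is independent of `u_0`, which contradicts the Class I condition.

The statement for `B` is the mirror image under `n ↦ -n`, which exchanges `(A1(x,y), A2(y,z))` with
`(B2(y,x), B1(z,y))`, and starts from the third integrability condition.
-/

open Finset

noncomputable section

/-- Logarithmic derivative of `G` in its first argument. -/
def ld1 (G : ℝ → ℝ → ℝ) (x y : ℝ) : ℝ := deriv (fun t => G t y) x / G x y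

/-- Logarithmic derivative of `G` in its second argument. -/
def ld2 (G : ℝ → ℝ → ℝ) (x y : ℝ) : ℝ := deriv (fun t => G x t) y / G x y

theorem differentiable_fst_slice {G : ℝ → ℝ → ℝ}
    (hG : ContDiff ℝ (⊤ : ℕ∞) fun p : ℝ × ℝ => G p.1 p.2) (y : ℝ) :
    Differentiable ℝ (fun t => G t y) :=
  (hG.comp (contDiff_id.prodMk contDiff_const)).differentiable (by simp)

theorem differentiable_snd_slice {G : ℝ → ℝ → ℝ}
    (hG : ContDiff ℝ (⊤ : ℕ∞) fun p : ℝ × ℝ => G p.1 p.2) (x : ℝ) :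
    Differentiable ℝ (fun t => G x t) :=
  (hG.comp (contDiff_const.prodMk contDiff_id)).differentiable (by simp)

theorem hasDerivAt_fst {G : ℝ → ℝ → ℝ}
    (hG : ContDiff ℝ (⊤ : ℕ∞) fun p : ℝ × ℝ => G p.1 p.2) (hne : ∀ x y, G x y ≠ 0) (x y : ℝ) :
    HasDerivAt (fun t => G t y) (G x y * ld1 G x y) x := by
  have := (differentiable_fst_slice hG y x).hasDerivAt
  rwa [ld1, mul_div_cancel₀ _ (hne x y)]

theorem hasDerivAt_snd {G : ℝ → ℝ → ℝ}
    (hG : ContDiff ℝ (⊤ : ℕ∞) fun p : ℝ × ℝ => G p.1 p.2) (hne : ∀ x y, G x y ≠ 0) (x y : ℝ) :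
    HasDerivAt (fun t => G x t) (G x y * ld2 G x y) y := by
  have := (differentiable_snd_slice hG x y).hasDerivAt
  rwa [ld2, mul_div_cancel₀ _ (hne x y)]

theorem contDiff_ld1 {G : ℝ → ℝ → ℝ}
    (hG : ContDiff ℝ (⊤ : ℕ∞) fun p : ℝ × ℝ => G p.1 p.2) (hne : ∀ x y, G x y ≠ 0) :
    ContDiff ℝ (⊤ : ℕ∞) fun p : ℝ × ℝ => ld1 G p.1 p.2 := by
  have h : ∀ p : ℝ × ℝ, deriv (fun t => G t p.2) p.1
      = fderiv ℝ (fun p : ℝ × ℝ => G p.1 p.2) p (1, 0) := by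
    intro p
    have h1 := ((hG.differentiable (by simp)) p).hasFDerivAt
    have h2 : HasDerivAt (fun t : ℝ => (t, p.2)) ((1 : ℝ), (0 : ℝ)) p.1 :=
      (hasDerivAt_id p.1).prodMk (hasDerivAt_const _ _)
    exact (HasFDerivAt.comp_hasDerivAt p.1 (l := fun p : ℝ × ℝ => G p.1 p.2) h1 h2).deriv
  unfold ld1
  refine ContDiff.div ?_ hG (fun p => hne _ _)
  simp_rw [h]
  exact (hG.fderiv_right (m := (⊤ : ℕ∞)) (by simp)).clm_apply contDiff_const

theorem contDiff_ld2 {G : ℝ → ℝ → ℝ}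
    (hG : ContDiff ℝ (⊤ : ℕ∞) fun p : ℝ × ℝ => G p.1 p.2) (hne : ∀ x y, G x y ≠ 0) :
    ContDiff ℝ (⊤ : ℕ∞) fun p : ℝ × ℝ => ld2 G p.1 p.2 := by
  have hs : ContDiff ℝ (⊤ : ℕ∞) fun p : ℝ × ℝ => (fun x y => G y x) p.1 p.2 :=
    hG.comp (contDiff_snd.prodMk contDiff_fst)
  exact (contDiff_ld1 hs (fun x y => hne y x)).comp (contDiff_snd.prodMk contDiff_fst)

/-- The sequence with values `p3, p2, p1, p0, m1, m2, m3` at the sites `3, 2, 1, 0, -1, -2, -3`, and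
`0` elsewhere. -/
def seq7 (p3 p2 p1 p0 m1 m2 m3 : ℝ) : ℤ → ℝ := fun j =>
  if j = 3 then p3 else if j = 2 then p2 else if j = 1 then p1 else if j = 0 then p0
  else if j = -1 then m1 else if j = -2 then m2 else if j = -3 then m3 else 0

theorem update_seq7 (p3 p2 p1 p0 m1 m2 m3 x : ℝ) :
    Function.update (seq7 p3 p2 p1 p0 m1 m2 m3) 0 x = seq7 p3 p2 p1 x m1 m2 m3 := by
  funext j
  by_cases hj : j = 0
  · subst hj; simp [seq7]
  · simp [seq7, hj]

/-- `D_t log |g_{-2} g_0 g_2|` with `g = G1 * G2`, evaluated along `seq7`. -/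
def logDt (A B C : ℝ → ℝ → ℝ → ℝ) (G1 G2 : ℝ → ℝ → ℝ) (p3 p2 p1 p0 m1 m2 m3 : ℝ) : ℝ :=
  (B 0 p3 p2 * p1 + C 0 p3 p2) * ld1 G1 p3 p2
  + (B p3 p2 p1 * p0 + C p3 p2 p1) * (ld2 G1 p3 p2 + ld1 G2 p2 p1)
  + (A p2 p1 p0 * p3 + B p2 p1 p0 * m1 + C p2 p1 p0) * (ld2 G2 p2 p1 + ld1 G1 p1 p0)
  + (A p1 p0 m1 * p2 + B p1 p0 m1 * m2 + C p1 p0 m1) * (ld2 G1 p1 p0 + ld1 G2 p0 m1)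
  + (A p0 m1 m2 * p1 + B p0 m1 m2 * m3 + C p0 m1 m2) * (ld2 G2 p0 m1 + ld1 G1 m1 m2)
  + (A m1 m2 m3 * p0 + C m1 m2 m3) * (ld2 G1 m1 m2 + ld1 G2 m2 m3)
  + (A m2 m3 0 * m1 + C m2 m3 0) * ld2 G2 m2 m3

/-- Each nonzero `∂/∂u_k` of the product `g_{-2} g_0 g_2` is the product times a sum of at most two
logarithmic derivatives of `G1` and `G2`; only `-3 ≤ k ≤ 3` contribute. -/
theorem Dt_seq7 (A B C G : ℝ → ℝ → ℝ → ℝ) (G1 G2 : ℝ → ℝ → ℝ)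
    (hG1 : ContDiff ℝ (⊤ : ℕ∞) fun p : ℝ × ℝ => G1 p.1 p.2)
    (hG2 : ContDiff ℝ (⊤ : ℕ∞) fun p : ℝ × ℝ => G2 p.1 p.2)
    (hn1 : ∀ x y, G1 x y ≠ 0) (hn2 : ∀ x y, G2 x y ≠ 0)
    (hfac : ∀ x y z, G x y z = G1 x y * G2 y z) (p3 p2 p1 p0 m1 m2 m3 : ℝ) :
    Dt A B C (fun w => coefFn G (-2) w * coefFn G 0 w * coefFn G 2 w)
        (seq7 p3 p2 p1 p0 m1 m2 m3) /
      (coefFn G (-2) (seq7 p3 p2 p1 p0 m1 m2 m3) * coefFn G 0 (seq7 p3 p2 p1 p0 m1 m2 m3)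
        * coefFn G 2 (seq7 p3 p2 p1 p0 m1 m2 m3))
      = logDt A B C G1 G2 p3 p2 p1 p0 m1 m2 m3 := by
  have hI : Finset.Icc (-6 : ℤ) 6 = {-6, -5, -4, -3, -2, -1, 0, 1, 2, 3, 4, 5, 6} := by decide
  have d1 := fun x y => hasDerivAt_fst hG1 hn1 x y
  have d2 := fun x y => hasDerivAt_snd hG1 hn1 x y
  have e1 := fun x y => hasDerivAt_fst hG2 hn2 x y
  have e2 := fun x y => hasDerivAt_snd hG2 hn2 x y
  set φ : (ℤ → ℝ) → ℝ := fun w => coefFn G (-2) w * coefFn G 0 w * coefFn G 2 w with hφ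
  set K := G1 m1 m2 * G2 m2 m3 * (G1 p1 p0 * G2 p0 m1) * (G1 p3 p2 * G2 p2 p1) with hK
  have hK0 : K ≠ 0 := by
    simp only [hK, ne_eq, mul_eq_zero, hn1, hn2, or_self, not_false_eq_true]
  have hφu : coefFn G (-2) (seq7 p3 p2 p1 p0 m1 m2 m3) * coefFn G 0 (seq7 p3 p2 p1 p0 m1 m2 m3)
        * coefFn G 2 (seq7 p3 p2 p1 p0 m1 m2 m3) = K := by
    simp [coefFn, hfac, seq7, hK]
  have q0 : ∀ k ∈ ({-6, -5, -4, 4, 5, 6} : Finset ℤ), pd φ k (seq7 p3 p2 p1 p0 m1 m2 m3) = 0 := by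
    intro k hk
    fin_cases hk <;> simp [pd, hφ, coefFn]
  have hpd : ∀ (k : ℤ) (f : ℝ → ℝ) (d e : ℝ), HasDerivAt f d (seq7 p3 p2 p1 p0 m1 m2 m3 k) →
      (∀ x, φ (Function.update (seq7 p3 p2 p1 p0 m1 m2 m3) k x) = f x) → d = e →
      pd φ k (seq7 p3 p2 p1 p0 m1 m2 m3) = e := by
    intro k f d e hf hfx hde
    rw [pd, funext hfx, hf.deriv, hde]
  have q3 : pd φ 3 (seq7 p3 p2 p1 p0 m1 m2 m3) = K * ld1 G1 p3 p2 := by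
    refine hpd _ _ _ _ (((d1 _ p2).mul_const (G2 p2 p1)).const_mul ((G1 m1 m2 * G2 m2 m3) * (G1 p1 p0 * G2 p0 m1))) (fun x => ?_) ?_
    · simp [hφ, coefFn, seq7, hfac]
    · simp [seq7, hK]; ring
  have q2 : pd φ 2 (seq7 p3 p2 p1 p0 m1 m2 m3) = K * (ld2 G1 p3 p2 + ld1 G2 p2 p1) := by
    refine hpd _ _ _ _ (((d2 p3 _).mul (e1 _ p1)).const_mul ((G1 m1 m2 * G2 m2 m3) * (G1 p1 p0 * G2 p0 m1))) (fun x => ?_) ?_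
    · simp [hφ, coefFn, seq7, hfac]
    · simp [seq7, hK]; ring
  have q1 : pd φ 1 (seq7 p3 p2 p1 p0 m1 m2 m3) = K * (ld2 G2 p2 p1 + ld1 G1 p1 p0) := by
    refine hpd _ _ _ _ ((((d1 _ p0).mul_const (G2 p0 m1)).const_mul (G1 m1 m2 * G2 m2 m3)).mul
      ((e2 p2 _).const_mul (G1 p3 p2))) (fun x => ?_) ?_
    · simp [hφ, coefFn, seq7, hfac]
    · simp [seq7, hK]; ring
  have q00 : pd φ 0 (seq7 p3 p2 p1 p0 m1 m2 m3) = K * (ld2 G1 p1 p0 + ld1 G2 p0 m1) := by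
    refine hpd _ _ _ _ ((((d2 p1 _).mul (e1 _ m1)).const_mul (G1 m1 m2 * G2 m2 m3)).mul_const (G1 p3 p2 * G2 p2 p1)) (fun x => ?_) ?_
    · simp [hφ, coefFn, seq7, hfac]
    · simp [seq7, hK]; ring
  have qm1 : pd φ (-1) (seq7 p3 p2 p1 p0 m1 m2 m3) = K * (ld2 G2 p0 m1 + ld1 G1 m1 m2) := by
    refine hpd _ _ _ _ ((((d1 _ m2).mul_const (G2 m2 m3)).mul ((e2 p0 _).const_mul (G1 p1 p0))).mul_const
      (G1 p3 p2 * G2 p2 p1)) (fun x => ?_) ?_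
    · simp [hφ, coefFn, seq7, hfac]
    · simp [seq7, hK]; ring
  have qm2 : pd φ (-2) (seq7 p3 p2 p1 p0 m1 m2 m3) = K * (ld2 G1 m1 m2 + ld1 G2 m2 m3) := by
    refine hpd _ _ _ _ ((((d2 m1 _).mul (e1 _ m3)).mul_const (G1 p1 p0 * G2 p0 m1)).mul_const (G1 p3 p2 * G2 p2 p1)) (fun x => ?_) ?_
    · simp [hφ, coefFn, seq7, hfac]
    · simp [seq7, hK]; ring
  have qm3 : pd φ (-3) (seq7 p3 p2 p1 p0 m1 m2 m3) = K * ld2 G2 m2 m3 := by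
    refine hpd _ _ _ _ ((((e2 m2 _).const_mul (G1 m1 m2)).mul_const (G1 p1 p0 * G2 p0 m1)).mul_const (G1 p3 p2 * G2 p2 p1)) (fun x => ?_) ?_
    · simp [hφ, coefFn, seq7, hfac]
    · simp [seq7, hK]; ring
  rw [hφu, Dt, hI, div_eq_iff hK0]
  simp only [Finset.mem_insert, Finset.mem_singleton, forall_eq_or_imp, forall_eq] at q0
  obtain ⟨r1, r2, r3, r4, r5, r6⟩ := q0
  have s5 : Finset.sum {-6, -5, -4, -3, -2, -1, 0, 1, 2, 3, 4, 5, 6}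
      (fun k : ℤ => rhsF A B C k (seq7 p3 p2 p1 p0 m1 m2 m3) *
        pd φ k (seq7 p3 p2 p1 p0 m1 m2 m3)) =
      rhsF A B C (-3) (seq7 p3 p2 p1 p0 m1 m2 m3) * (K * ld2 G2 m2 m3)
      + rhsF A B C (-2) (seq7 p3 p2 p1 p0 m1 m2 m3) * (K * (ld2 G1 m1 m2 + ld1 G2 m2 m3))
      + rhsF A B C (-1) (seq7 p3 p2 p1 p0 m1 m2 m3) * (K * (ld2 G2 p0 m1 + ld1 G1 m1 m2))
      + rhsF A B C 0 (seq7 p3 p2 p1 p0 m1 m2 m3) * (K * (ld2 G1 p1 p0 + ld1 G2 p0 m1))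
      + rhsF A B C 1 (seq7 p3 p2 p1 p0 m1 m2 m3) * (K * (ld2 G2 p2 p1 + ld1 G1 p1 p0))
      + rhsF A B C 2 (seq7 p3 p2 p1 p0 m1 m2 m3) * (K * (ld2 G1 p3 p2 + ld1 G2 p2 p1))
      + rhsF A B C 3 (seq7 p3 p2 p1 p0 m1 m2 m3) * (K * ld1 G1 p3 p2) := by
    rw [← q3, ← q2, ← q1, ← q00, ← qm1, ← qm2, ← qm3]
    repeat rw [Finset.sum_insert (by decide)]
    rw [Finset.sum_singleton, r1, r2, r3, r4, r5, r6]
    ring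
  rw [s5]
  clear_value K
  simp [rhsF, coefFn, seq7, logDt]
  ring

/-- The function `logDt` takes the same value for all values of the variable `u_0`. -/
theorem logDt_const (A B C G : ℝ → ℝ → ℝ → ℝ) (G1 G2 : ℝ → ℝ → ℝ)
    (hA : ContDiff ℝ (⊤ : ℕ∞) fun p : ℝ × ℝ × ℝ => A p.1 p.2.1 p.2.2)
    (hB : ContDiff ℝ (⊤ : ℕ∞) fun p : ℝ × ℝ × ℝ => B p.1 p.2.1 p.2.2)
    (hC : ContDiff ℝ (⊤ : ℕ∞) fun p : ℝ × ℝ × ℝ => C p.1 p.2.1 p.2.2)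
    (hG1 : ContDiff ℝ (⊤ : ℕ∞) fun p : ℝ × ℝ => G1 p.1 p.2)
    (hG2 : ContDiff ℝ (⊤ : ℕ∞) fun p : ℝ × ℝ => G2 p.1 p.2)
    (hn1 : ∀ x y, G1 x y ≠ 0) (hn2 : ∀ x y, G2 x y ≠ 0)
    (hfac : ∀ x y z, G x y z = G1 x y * G2 y z)
    (h : ∀ u : ℤ → ℝ, pd (fun v =>
        Dt A B C (fun w => coefFn G (-2) w * coefFn G 0 w * coefFn G 2 w) v /
          (coefFn G (-2) v * coefFn G 0 v * coefFn G 2 v)) 0 u = 0)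
    (p3 p2 p1 m1 m2 m3 s s' : ℝ) :
    logDt A B C G1 G2 p3 p2 p1 s m1 m2 m3 = logDt A B C G1 G2 p3 p2 p1 s' m1 m2 m3 := by
  have t3 : ∀ {F : ℝ → ℝ → ℝ → ℝ},
      (ContDiff ℝ (⊤ : ℕ∞) fun p : ℝ × ℝ × ℝ => F p.1 p.2.1 p.2.2) →
      (∀ y z, Differentiable ℝ fun x => F x y z) ∧ (∀ x z, Differentiable ℝ fun y => F x y z) ∧
      (∀ x y, Differentiable ℝ fun z => F x y z) := fun hF =>
    ⟨fun y z => (hF.comp (contDiff_id.prodMk (contDiff_const (c := (y, z))))).differentiable (by simp),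
     fun x z => (hF.comp (contDiff_const.prodMk
      (contDiff_id.prodMk contDiff_const))).differentiable (by simp),
     fun x y => (hF.comp (contDiff_const.prodMk
      (contDiff_const.prodMk contDiff_id))).differentiable (by simp)⟩
  obtain ⟨a1, a2, a3⟩ := t3 hA
  obtain ⟨b1, b2, b3⟩ := t3 hB
  obtain ⟨c1, c2, c3⟩ := t3 hC
  have l1 := differentiable_snd_slice (contDiff_ld1 hG1 hn1)
  have l2 := differentiable_snd_slice (contDiff_ld2 hG1 hn1)
  have l3 := differentiable_fst_slice (contDiff_ld1 hG2 hn2)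
  have l4 := differentiable_fst_slice (contDiff_ld2 hG2 hn2)
  refine is_const_of_deriv_eq_zero (f := fun x => logDt A B C G1 G2 p3 p2 p1 x m1 m2 m3) ?_ ?_ s s'
  · unfold logDt
    fun_prop
  · intro x
    have := h (seq7 p3 p2 p1 x m1 m2 m3)
    simp only [pd, update_seq7, Dt_seq7 A B C G G1 G2 hG1 hG2 hn1 hn2 hfac] at this
    simpa [seq7] using this

/-- Mixed second differences of `logDt` in the variables `u_0`, `u_3` and `u_0`, `u_{-3}`. -/
theorem mixed_differences (A B C G : ℝ → ℝ → ℝ → ℝ) (G1 G2 : ℝ → ℝ → ℝ)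
    (hA : ContDiff ℝ (⊤ : ℕ∞) fun p : ℝ × ℝ × ℝ => A p.1 p.2.1 p.2.2)
    (hB : ContDiff ℝ (⊤ : ℕ∞) fun p : ℝ × ℝ × ℝ => B p.1 p.2.1 p.2.2)
    (hC : ContDiff ℝ (⊤ : ℕ∞) fun p : ℝ × ℝ × ℝ => C p.1 p.2.1 p.2.2)
    (hG1 : ContDiff ℝ (⊤ : ℕ∞) fun p : ℝ × ℝ => G1 p.1 p.2)
    (hG2 : ContDiff ℝ (⊤ : ℕ∞) fun p : ℝ × ℝ => G2 p.1 p.2)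
    (hn1 : ∀ x y, G1 x y ≠ 0) (hn2 : ∀ x y, G2 x y ≠ 0)
    (hfac : ∀ x y z, G x y z = G1 x y * G2 y z)
    (h : ∀ u : ℤ → ℝ, pd (fun v =>
        Dt A B C (fun w => coefFn G (-2) w * coefFn G 0 w * coefFn G 2 w) v /
          (coefFn G (-2) v * coefFn G 0 v * coefFn G 2 v)) 0 u = 0) :
    (∀ x y s s' t t' : ℝ,
      (s - s') * (B t x y * (ld2 G1 t x + ld1 G2 x y) - B t' x y * (ld2 G1 t' x + ld1 G2 x y))
      + (t - t') * (A x y s * (ld2 G2 x y + ld1 G1 y s)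
          - A x y s' * (ld2 G2 x y + ld1 G1 y s')) = 0) ∧
    (∀ y z s s' w w' : ℝ,
      (w - w') * (B s y z * (ld2 G2 s y + ld1 G1 y z) - B s' y z * (ld2 G2 s' y + ld1 G1 y z))
      + (s - s') * (A y z w * (ld2 G1 y z + ld1 G2 z w)
          - A y z w' * (ld2 G1 y z + ld1 G2 z w')) = 0) := by
  have key := logDt_const A B C G G1 G2 hA hB hC hG1 hG2 hn1 hn2 hfac h
  constructor
  · intro x y s s' t t'
    have e1 := key t x y 0 0 0 s s'
    have e2 := key t' x y 0 0 0 s s'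
    unfold logDt at e1 e2
    linear_combination e1 - e2
  · intro y z s s' w w'
    have e1 := key 0 0 0 y z w s s'
    have e2 := key 0 0 0 y z w' s s'
    unfold logDt at e1 e2
    linear_combination e1 - e2

/-- Rigidity: two functions built from `G1`, `G2` being affine in the last variable, either
`G2` is affine in its second argument, or the product `G1(x,y) G2(y,z)` degenerates to
`c P(x) / P(z)`. -/
theorem affine_or_ratio (G1 G2 : ℝ → ℝ → ℝ)
    (hG1 : ContDiff ℝ (⊤ : ℕ∞) fun p : ℝ × ℝ => G1 p.1 p.2)
    (hG2 : ContDiff ℝ (⊤ : ℕ∞) fun p : ℝ × ℝ => G2 p.1 p.2)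
    (hn1 : ∀ x y, G1 x y ≠ 0) (hn2 : ∀ x y, G2 x y ≠ 0)
    (hP : ∀ x y w, G1 x y * G2 y w * (ld2 G1 x y + ld1 G2 y w)
      - G1 x y * G2 y 0 * (ld2 G1 x y + ld1 G2 y 0)
      = w * (G1 x y * G2 y 1 * (ld2 G1 x y + ld1 G2 y 1)
        - G1 x y * G2 y 0 * (ld2 G1 x y + ld1 G2 y 0)))
    (hQ : ∀ x y w, G1 x y * G2 y w * (ld2 G2 x y + ld1 G1 y w)
      - G1 x y * G2 y 0 * (ld2 G2 x y + ld1 G1 y 0)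
      = w * (G1 x y * G2 y 1 * (ld2 G2 x y + ld1 G1 y 1)
        - G1 x y * G2 y 0 * (ld2 G2 x y + ld1 G1 y 0))) :
    (∀ y z, deriv (fun t => deriv (fun s => G2 y s) t) z = 0) ∨
    ∃ (c : ℝ) (P : ℝ → ℝ), (∀ x, P x ≠ 0) ∧ ∀ x y z, G1 x y * G2 y z = c * P x / P z := by
  by_cases haff : ∀ y z, G2 y z - G2 y 0 - z * (G2 y 1 - G2 y 0) = 0
  · left
    intro y z
    have e : (fun s => G2 y s) = fun s => G2 y 0 + s * (G2 y 1 - G2 y 0) := by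
      funext s; linarith [haff y s]
    rw [e]
    have : (fun t => deriv (fun s => G2 y 0 + s * (G2 y 1 - G2 y 0)) t)
        = fun _ => G2 y 1 - G2 y 0 := by
      funext t
      simp
    rw [this]
    simp
  · right
    push Not at haff
    obtain ⟨y₀, z, hW⟩ := haff
    -- `W` is a second difference of `G2 y`, with nodes `0`, `1`, `z`.
    set W : ℝ → ℝ := fun y => G2 y z - G2 y 0 - z * (G2 y 1 - G2 y 0) with hWdef
    have hWd : ∀ y, HasDerivAt W (G2 y z * ld1 G2 y z - G2 y 0 * ld1 G2 y 0
        - z * (G2 y 1 * ld1 G2 y 1 - G2 y 0 * ld1 G2 y 0)) y := fun y =>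
      ((hasDerivAt_fst hG2 hn2 y z).sub (hasDerivAt_fst hG2 hn2 y 0)).sub
        (((hasDerivAt_fst hG2 hn2 y 1).sub (hasDerivAt_fst hG2 hn2 y 0)).const_mul z)
    have hconst : ∀ x y, G1 x y * W y = G1 x y₀ * W y₀ := by
      intro x y
      have hd : ∀ t, HasDerivAt (fun t => G1 x t * W t) 0 t := by
        intro t
        refine ((hasDerivAt_snd hG1 hn1 x t).mul (hWd t)).congr_deriv ?_
        simp only [hWdef]
        linear_combination hP x t z
      exact is_const_of_deriv_eq_zero (fun t => (hd t).differentiableAt) (fun t => (hd t).deriv)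
        y y₀
    have hW0 : W y₀ ≠ 0 := hW
    have hWne : ∀ y, W y ≠ 0 := by
      intro y hy
      have := hconst 0 y
      rw [hy, mul_zero] at this
      exact mul_ne_zero (hn1 0 y₀) hW0 this.symm
    have hG1' : ∀ x y, G1 x y = G1 x y₀ * (W y₀ / W y) := by
      intro x y
      have := hconst x y
      field_simp [hWne y]
      linarith
    have hld : ∀ y w, ld1 G1 y w = ld1 G1 y y₀ := by
      intro y w
      have e : (fun t => G1 t w) = fun t => G1 t y₀ * (W y₀ / W w) := by
        funext t; exact hG1' t w
      have hr : W y₀ / W w ≠ 0 := div_ne_zero hW0 (hWne w)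
      rw [ld1, ld1, e, hG1' y w,
        ((differentiable_fst_slice hG1 y₀ y).hasDerivAt.mul_const (W y₀ / W w)).deriv,
        mul_div_mul_right _ _ hr]
    have hzero : ∀ x y, ld2 G2 x y + ld1 G1 y y₀ = 0 := by
      intro x y
      have := hQ x y z
      rw [hld y z, hld y 0, hld y 1] at this
      have h2 : G1 x y * W y * (ld2 G2 x y + ld1 G1 y y₀) = 0 := by
        simp only [hWdef]; linear_combination this
      exact (mul_eq_zero.mp h2).resolve_left (mul_ne_zero (hn1 x y) (hWne y))
    have hG2' : ∀ x y, G2 x y * G1 y y₀ = G2 x 0 * G1 0 y₀ := by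
      intro x y
      have hd : ∀ t, HasDerivAt (fun t => G2 x t * G1 t y₀) 0 t := by
        intro t
        refine ((hasDerivAt_snd hG2 hn2 x t).mul (hasDerivAt_fst hG1 hn1 t y₀)).congr_deriv ?_
        linear_combination G2 x t * G1 t y₀ * hzero x t
      exact is_const_of_deriv_eq_zero (fun t => (hd t).differentiableAt) (fun t => (hd t).deriv)
        y 0
    have hG2'' : ∀ x y, G2 x y = G2 x 0 * G1 0 y₀ / G1 y y₀ := fun x y => by
      rw [eq_div_iff (hn1 y y₀), hG2' x y]
    -- `W` is `G2 · 0` times the second difference of `G1 0 y₀ / G1 · y₀`.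
    set κ : ℝ := G1 0 y₀ / G1 z y₀ - 1 - z * (G1 0 y₀ / G1 1 y₀ - 1) with hκ
    have hWκ : ∀ y, W y = G2 y 0 * κ := by
      intro y
      simp only [hWdef, hκ]
      rw [hG2'' y z, hG2'' y 1]
      ring
    have hκ0 : κ ≠ 0 := fun h0 => hW0 (by rw [hWκ, h0, mul_zero])
    refine ⟨W y₀ * G1 0 y₀ / κ, fun x => G1 x y₀, fun x => hn1 x y₀, fun x y z' => ?_⟩
    rw [hG1' x y, hG2'' y z', hWκ y]
    have := hn2 y 0
    have := hn1 z' y₀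
    field_simp

/-- Theorem 5: under the four integrability conditions, the
Class I conditions, and factorized coefficients `A = A1·A2`, `B = B1·B2`,
the factor `A2` is affine in its second argument and `B1` is affine in its
first argument. -/
theorem theorem5_affine_factors
    (A B C : ℝ → ℝ → ℝ → ℝ)
    (hA : ContDiff ℝ (⊤ : ℕ∞) fun p : ℝ × ℝ × ℝ => A p.1 p.2.1 p.2.2)
    (hB : ContDiff ℝ (⊤ : ℕ∞) fun p : ℝ × ℝ × ℝ => B p.1 p.2.1 p.2.2)
    (hC : ContDiff ℝ (⊤ : ℕ∞) fun p : ℝ × ℝ × ℝ => C p.1 p.2.1 p.2.2)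
    (hAne : ∀ x y z : ℝ, A x y z ≠ 0)
    (hBne : ∀ x y z : ℝ, B x y z ≠ 0)
    (h1 : ∀ u : ℤ → ℝ, pd (fun v =>
        Dt A B C (fun w => coefFn A (-2) w * coefFn A 0 w * coefFn A 2 w) v /
          (coefFn A (-2) v * coefFn A 0 v * coefFn A 2 v)) 0 u = 0)
    (h2 : ∀ u : ℤ → ℝ, pd (fun v =>
        Dt A B C (fun w => coefFn A (-3) w * coefFn A (-1) w * coefFn A 1 w * coefFn A 3 w) v /
          (coefFn A (-3) v * coefFn A (-1) v * coefFn A 1 v * coefFn A 3 v)) 0 u = 0)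
    (h3 : ∀ u : ℤ → ℝ, pd (fun v =>
        Dt A B C (fun w => coefFn B (-2) w * coefFn B 0 w * coefFn B 2 w) v /
          (coefFn B (-2) v * coefFn B 0 v * coefFn B 2 v)) 0 u = 0)
    (h4 : ∀ u : ℤ → ℝ, pd (fun v =>
        Dt A B C (fun w => coefFn B (-3) w * coefFn B (-1) w * coefFn B 1 w * coefFn B 3 w) v /
          (coefFn B (-3) v * coefFn B (-1) v * coefFn B 1 v * coefFn B 3 v)) 0 u = 0)
    (hClassA : ¬ ∀ u : ℤ → ℝ,
        pd (fun v => coefFn A 1 v * coefFn A (-1) v / coefFn A 0 v) 0 u = 0)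
    (hClassB : ¬ ∀ u : ℤ → ℝ,
        pd (fun v => coefFn B 1 v * coefFn B (-1) v / coefFn B 0 v) 0 u = 0)
    (A1 A2 B1 B2 : ℝ → ℝ → ℝ)
    (hA1 : ContDiff ℝ (⊤ : ℕ∞) fun p : ℝ × ℝ => A1 p.1 p.2)
    (hA2 : ContDiff ℝ (⊤ : ℕ∞) fun p : ℝ × ℝ => A2 p.1 p.2)
    (hB1 : ContDiff ℝ (⊤ : ℕ∞) fun p : ℝ × ℝ => B1 p.1 p.2)
    (hB2 : ContDiff ℝ (⊤ : ℕ∞) fun p : ℝ × ℝ => B2 p.1 p.2)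
    (hfacA : ∀ x y z : ℝ, A x y z = A1 x y * A2 y z)
    (hfacB : ∀ x y z : ℝ, B x y z = B1 x y * B2 y z) :
    (∀ y z : ℝ, deriv (fun t => deriv (fun s => A2 y s) t) z = 0) ∧
    (∀ x y : ℝ, deriv (fun t => deriv (fun s => B1 s y) t) x = 0) := by
  have hn1 : ∀ x y, A1 x y ≠ 0 := fun x y h => hAne x y 0 (by rw [hfacA, h, zero_mul])
  have hn2 : ∀ x y, A2 x y ≠ 0 := fun x y h => hAne 0 x y (by rw [hfacA, h, mul_zero])
  have kn1 : ∀ x y, B1 x y ≠ 0 := fun x y h => hBne x y 0 (by rw [hfacB, h, zero_mul])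
  have kn2 : ∀ x y, B2 x y ≠ 0 := fun x y h => hBne 0 x y (by rw [hfacB, h, mul_zero])
  obtain ⟨a3, a4⟩ := mixed_differences A B C A A1 A2 hA hB hC hA1 hA2 hn1 hn2 hfacA h1
  obtain ⟨b3, b4⟩ := mixed_differences A B C B B1 B2 hA hB hC hB1 hB2 kn1 kn2 hfacB h3
  -- A coefficient of the form `c P(x) / P(z)` violates the Class I condition.
  have noRatio : ∀ (F : ℝ → ℝ → ℝ → ℝ) (c : ℝ) (P : ℝ → ℝ), (∀ x, P x ≠ 0) →
      (∀ x y z, F x y z = c * P x / P z) → ∀ u : ℤ → ℝ,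
      pd (fun v => coefFn F 1 v * coefFn F (-1) v / coefFn F 0 v) 0 u = 0 := by
    intro F c P hP0 hF u
    have : (fun x => coefFn F 1 (Function.update u 0 x) * coefFn F (-1) (Function.update u 0 x)
        / coefFn F 0 (Function.update u 0 x))
        = fun _ => c * P (u 2) / P (u (-2)) / (P (u 1) / P (u (-1))) := by
      funext x
      simp only [coefFn, hF, Function.update_apply]
      norm_num
      have := hP0 x
      have := hP0 (u 1)
      have := hP0 (u (-1))
      have := hP0 (u (-2))
      by_cases hc : c = 0
      · simp [hc]
      · field_simp
    rw [pd, this]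
    simp
  constructor
  · rcases affine_or_ratio A1 A2 hA1 hA2 hn1 hn2
      (fun x y w => by
        have e1 := a4 x y 1 0 w 0
        have e2 := a4 x y 1 0 1 0
        simp only [hfacA] at e1 e2
        linear_combination e1 - w * e2)
      (fun x y w => by
        have e1 := a3 x y w 0 1 0
        have e2 := a3 x y 1 0 1 0
        simp only [hfacA] at e1 e2
        linear_combination e1 - w * e2) with h | ⟨c, P, hP0, hP⟩
    · exact h
    · exact absurd (noRatio A c P hP0 fun x y z => by rw [hfacA, hP]) hClassA
  · -- The reflection `n ↦ -n` replaces `(A1, A2)` by the transposes of `(B2, B1)`.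
    rcases affine_or_ratio (fun x y => B2 y x) (fun x y => B1 y x)
      (hB2.comp (contDiff_snd.prodMk contDiff_fst)) (hB1.comp (contDiff_snd.prodMk contDiff_fst))
      (fun x y => kn2 y x) (fun x y => kn1 y x)
      (fun x y w => by
        have e1 := b3 y x 1 0 w 0
        have e2 := b3 y x 1 0 1 0
        simp only [hfacB] at e1 e2
        simp only [ld1, ld2] at e1 e2 ⊢
        linear_combination e1 - w * e2)
      (fun x y w => by
        have e1 := b4 y x w 0 1 0
        have e2 := b4 y x 1 0 1 0
        simp only [hfacB] at e1 e2
        simp only [ld1, ld2] at e1 e2 ⊢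
        linear_combination e1 - w * e2) with h | ⟨c, P, hP0, hP⟩
    · exact fun x y => h y x
    · refine absurd (noRatio B c (fun x => (P x)⁻¹) (fun x => inv_ne_zero (hP0 x))
        fun x y z => ?_) hClassB
      have := hP z y x
      rw [hfacB, mul_comm, this, div_inv_eq_mul]
      ring
end
end

section
/- The flow u_{n,τ} = g_n with g_0 = u_0( u_2(u_4+u_2+u_0) − u_{−2}(u_0+u_{−2}+u_{−4}) ) is a generalized symmetry of equation (E1), the Volterra equation in five-point form u̇_n = f_n with f_0 = u_0(u_2 − u_{−2}); i.e. the compatibility condition Σ_{k=−4}^{4} f_k · ∂g_0/∂u_k = Σ_{k=−2}^{2} g_k · ∂f_0/∂u_k holds identically in the real variables u_{−6},…,u_6. -/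
/-!
Both right-hand sides are polynomials in the lattice variables, so every partial derivative is
given by the product rule with Kronecker deltas for the derivatives of the coordinates
(`pd_fE1`, `pd_gE1`). Substituting these in the two finite sums turns the compatibility
condition into a polynomial identity in `u (-6), …, u 6`, which holds by expansion.
-/

open Finset

noncomputable section

/-- The compatibility condition stating that the flow `u_{n,τ} = g_n` is a
generalized symmetry of the equation `u̇_n = f_n`:
`Σ_{k=-4}^{4} f_k ∂g_0/∂u_k = Σ_{k=-2}^{2} g_k ∂f_0/∂u_k` identically on `dom`. -/
def IsGenSymmetry (f g : (ℤ → ℝ) → ℝ) (dom : (ℤ → ℝ) → Prop) : Prop :=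
  ∀ u : ℤ → ℝ, dom u →
    (∑ k ∈ Finset.Icc (-4 : ℤ) 4, f (shift k u) * pd g k u) =
      ∑ k ∈ Finset.Icc (-2 : ℤ) 2, g (shift k u) * pd f k u

/-- Right-hand side of (E1), the Volterra equation in five-point form. -/
def fE1 (u : ℤ → ℝ) : ℝ := u 0 * (u 2 - u (-2))

/-- Simplest generalized symmetry of (E1). -/
def gE1 (u : ℤ → ℝ) : ℝ :=
  u 0 * (u 2 * (u 4 + u 2 + u 0) - u (-2) * (u 0 + u (-2) + u (-4)))

/-- The partial derivative of the coordinate `u_j` along `u_k` is the Kronecker delta. -/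
lemma hasDerivAt_update_coord (u : ℤ → ℝ) (k j : ℤ) :
    HasDerivAt (fun x => Function.update u k x j) (if j = k then 1 else 0) (u k) := by
  rcases eq_or_ne j k with rfl | h
  · simpa using hasDerivAt_id' (u j)
  · simpa [Function.update_of_ne h, h] using hasDerivAt_const (u k) (u j)

lemma pd_fE1 (u : ℤ → ℝ) (k : ℤ) :
    pd fE1 k u = (if 0 = k then 1 else 0) * (u 2 - u (-2))
      + u 0 * ((if 2 = k then 1 else 0) - (if -2 = k then 1 else 0)) := by
  have d := hasDerivAt_update_coord u k
  have h₁ := (d 2).fun_sub (d (-2))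
  have h := (d 0).fun_mul h₁
  simp only [Function.update_eq_self] at h
  exact h.deriv

lemma pd_gE1 (u : ℤ → ℝ) (k : ℤ) :
    pd gE1 k u =
      (if 0 = k then 1 else 0)
          * (u 2 * (u 4 + u 2 + u 0) - u (-2) * (u 0 + u (-2) + u (-4)))
        + u 0 * (((if 2 = k then 1 else 0) * (u 4 + u 2 + u 0)
              + u 2 * ((if 4 = k then 1 else 0) + (if 2 = k then 1 else 0)
                + (if 0 = k then 1 else 0)))
            - ((if -2 = k then 1 else 0) * (u 0 + u (-2) + u (-4))
              + u (-2) * ((if 0 = k then 1 else 0) + (if -2 = k then 1 else 0)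
                + (if -4 = k then 1 else 0)))) := by
  have d := hasDerivAt_update_coord u k
  have h₁ := ((d 4).fun_add (d 2)).fun_add (d 0)
  have h₂ := ((d 0).fun_add (d (-2))).fun_add (d (-4))
  have h₃ := (d 2).fun_mul h₁
  have h₄ := (d (-2)).fun_mul h₂
  have h₅ := h₃.fun_sub h₄
  have h := (d 0).fun_mul h₅
  simp only [Function.update_eq_self] at h
  exact h.deriv

/-- the flow `g` is a generalized symmetry of the Volterra
equation (E1). -/
theorem volterra_gen_symmetry : IsGenSymmetry fE1 gE1 (fun _ => True) := by
  intro u _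
  have h4 : Finset.Icc (-4 : ℤ) 4 = {-4, -3, -2, -1, 0, 1, 2, 3, 4} := by decide
  have h2 : Finset.Icc (-2 : ℤ) 2 = {-2, -1, 0, 1, 2} := by decide
  rw [h4, h2]
  simp only [pd_fE1, pd_gE1]
  simp [fE1, gE1, shift]
  ring
end
end

section
/- For every real constant c, the flow u_{n,τ} = g_n with g_0 = (u_0²+c u_0)·( (u_2²+c u_2)(u_4+u_0+c) − (u_{−2}²+c u_{−2})(u_0+u_{−4}+c) ) is a generalized symmetry of the equation u̇_n = f_n with f_0 = (u_0²+c u_0)(u_2 − u_{−2}); i.e. Σ_{k=−4}^{4} f_k · ∂g_0/∂u_k = Σ_{k=−2}^{2} g_k · ∂f_0/∂u_k holds identically in u_{−6},…,u_6. (The case c = 0 is equation (E2) and c = 1 is equation (E3) of the classification.) -/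
/-!
The fluxes are polynomials, and `gE23 c` and `fE23 c` have degree at most three in each single
lattice variable. Their partial derivatives are therefore read off from the coefficients of a
one-variable cubic (`pd_eq_of_cubic`), and vanish for the odd shifts because only the variables
`u_0, u_{±2}, u_{±4}` occur. Once these derivatives are substituted, the compatibility condition
is a polynomial identity in `u_{-6}, u_{-4}, …, u_6` and `c`, which holds after expansion.
-/

open Finset

noncomputable section

/-- Right-hand side of the modified Volterra equations ((E2) for c = 0,
(E3) for c = 1). -/
def fE23 (c : ℝ) (u : ℤ → ℝ) : ℝ := ((u 0) ^ 2 + c * u 0) * (u 2 - u (-2))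

/-- Generalized symmetry of the modified Volterra equations. -/
def gE23 (c : ℝ) (u : ℤ → ℝ) : ℝ :=
  ((u 0) ^ 2 + c * u 0) *
    (((u 2) ^ 2 + c * u 2) * (u 4 + u 0 + c)
      - ((u (-2)) ^ 2 + c * u (-2)) * (u 0 + u (-4) + c))

/-- A lattice function which is a cubic in `u_k` has the formal derivative of that cubic as its
partial derivative. -/
lemma pd_eq_of_cubic {φ : (ℤ → ℝ) → ℝ} {k : ℤ} {u : ℤ → ℝ} (a₀ a₁ a₂ a₃ : ℝ)
    (h : ∀ x, φ (Function.update u k x) = a₀ + a₁ * x + a₂ * x ^ 2 + a₃ * x ^ 3) :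
    pd φ k u = a₁ + 2 * a₂ * u k + 3 * a₃ * (u k) ^ 2 := by
  have hd : HasDerivAt (fun x : ℝ => a₀ + a₁ * x + a₂ * x ^ 2 + a₃ * x ^ 3)
      (a₁ + 2 * a₂ * u k + 3 * a₃ * (u k) ^ 2) (u k) := by
    refine (((((hasDerivAt_id (u k)).const_mul a₁).const_add a₀).add
      ((hasDerivAt_pow 2 (u k)).const_mul a₂)).add
      ((hasDerivAt_pow 3 (u k)).const_mul a₃)).congr_deriv ?_
    norm_num
    ring
  simp only [pd, h]
  exact hd.deriv

lemma pd_fE23_zero (c : ℝ) (u : ℤ → ℝ) :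
    pd (fE23 c) 0 u = (2 * u 0 + c) * (u 2 - u (-2)) := by
  rw [pd_eq_of_cubic 0 (c * (u 2 - u (-2))) (u 2 - u (-2)) 0]
  · ring
  · intro x
    simp [fE23]
    ring

lemma pd_fE23_two (c : ℝ) (u : ℤ → ℝ) :
    pd (fE23 c) 2 u = (u 0) ^ 2 + c * u 0 := by
  rw [pd_eq_of_cubic (-((u 0) ^ 2 + c * u 0) * u (-2)) ((u 0) ^ 2 + c * u 0) 0 0]
  · ring
  · intro x
    simp [fE23]
    ring

lemma pd_fE23_neg_two (c : ℝ) (u : ℤ → ℝ) :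
    pd (fE23 c) (-2) u = -((u 0) ^ 2 + c * u 0) := by
  rw [pd_eq_of_cubic (((u 0) ^ 2 + c * u 0) * u 2) (-((u 0) ^ 2 + c * u 0)) 0 0]
  · ring
  · intro x
    simp [fE23]
    ring

lemma pd_fE23_of_odd (c : ℝ) (u : ℤ → ℝ) {k : ℤ} (hk : Odd k) : pd (fE23 c) k u = 0 := by
  obtain ⟨m, rfl⟩ := hk
  rw [pd_eq_of_cubic (fE23 c u) 0 0 0]
  · ring
  · intro x
    have h0 : (0 : ℤ) ≠ 2 * m + 1 := by omega
    have h2 : (2 : ℤ) ≠ 2 * m + 1 := by omega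
    have hm2 : (-2 : ℤ) ≠ 2 * m + 1 := by omega
    simp [fE23, h0, h2, hm2]

lemma pd_gE23_zero (c : ℝ) (u : ℤ → ℝ) :
    pd (gE23 c) 0 u =
      (2 * u 0 + c) * (((u 2) ^ 2 + c * u 2) * (u 4 + u 0 + c)
        - ((u (-2)) ^ 2 + c * u (-2)) * (u 0 + u (-4) + c))
      + ((u 0) ^ 2 + c * u 0) * (((u 2) ^ 2 + c * u 2) - ((u (-2)) ^ 2 + c * u (-2))) := by
  -- `gE23 c` is `(x² + c x) (A + B x)` as a function of `x = u_0`
  obtain ⟨A, hA⟩ : ∃ A, A = ((u 2) ^ 2 + c * u 2) * (u 4 + c)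
    - ((u (-2)) ^ 2 + c * u (-2)) * (u (-4) + c) := ⟨_, rfl⟩
  obtain ⟨B, hB⟩ : ∃ B, B = ((u 2) ^ 2 + c * u 2) - ((u (-2)) ^ 2 + c * u (-2)) := ⟨_, rfl⟩
  rw [pd_eq_of_cubic 0 (c * A) (A + c * B) B]
  · rw [hA, hB]
    ring
  · intro x
    simp [gE23, hA, hB]
    ring

lemma pd_gE23_two (c : ℝ) (u : ℤ → ℝ) :
    pd (gE23 c) 2 u = ((u 0) ^ 2 + c * u 0) * ((2 * u 2 + c) * (u 4 + u 0 + c)) := by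
  rw [pd_eq_of_cubic
    (-((u 0) ^ 2 + c * u 0) * (((u (-2)) ^ 2 + c * u (-2)) * (u 0 + u (-4) + c)))
    (((u 0) ^ 2 + c * u 0) * (c * (u 4 + u 0 + c)))
    (((u 0) ^ 2 + c * u 0) * (u 4 + u 0 + c)) 0]
  · ring
  · intro x
    simp [gE23]
    ring

lemma pd_gE23_neg_two (c : ℝ) (u : ℤ → ℝ) :
    pd (gE23 c) (-2) u =
      -((u 0) ^ 2 + c * u 0) * ((2 * u (-2) + c) * (u 0 + u (-4) + c)) := by
  rw [pd_eq_of_cubic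
    (((u 0) ^ 2 + c * u 0) * (((u 2) ^ 2 + c * u 2) * (u 4 + u 0 + c)))
    (-((u 0) ^ 2 + c * u 0) * (c * (u 0 + u (-4) + c)))
    (-((u 0) ^ 2 + c * u 0) * (u 0 + u (-4) + c)) 0]
  · ring
  · intro x
    simp [gE23]
    ring

lemma pd_gE23_four (c : ℝ) (u : ℤ → ℝ) :
    pd (gE23 c) 4 u = ((u 0) ^ 2 + c * u 0) * ((u 2) ^ 2 + c * u 2) := by
  rw [pd_eq_of_cubic
    (((u 0) ^ 2 + c * u 0) * (((u 2) ^ 2 + c * u 2) * (u 0 + c)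
      - ((u (-2)) ^ 2 + c * u (-2)) * (u 0 + u (-4) + c)))
    (((u 0) ^ 2 + c * u 0) * ((u 2) ^ 2 + c * u 2)) 0 0]
  · ring
  · intro x
    simp [gE23]
    ring

lemma pd_gE23_neg_four (c : ℝ) (u : ℤ → ℝ) :
    pd (gE23 c) (-4) u = -((u 0) ^ 2 + c * u 0) * ((u (-2)) ^ 2 + c * u (-2)) := by
  rw [pd_eq_of_cubic
    (((u 0) ^ 2 + c * u 0) * (((u 2) ^ 2 + c * u 2) * (u 4 + u 0 + c)
      - ((u (-2)) ^ 2 + c * u (-2)) * (u 0 + c)))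
    (-((u 0) ^ 2 + c * u 0) * ((u (-2)) ^ 2 + c * u (-2))) 0 0]
  · ring
  · intro x
    simp [gE23]
    ring

lemma pd_gE23_of_odd (c : ℝ) (u : ℤ → ℝ) {k : ℤ} (hk : Odd k) : pd (gE23 c) k u = 0 := by
  obtain ⟨m, rfl⟩ := hk
  rw [pd_eq_of_cubic (gE23 c u) 0 0 0]
  · ring
  · intro x
    have h0 : (0 : ℤ) ≠ 2 * m + 1 := by omega
    have h2 : (2 : ℤ) ≠ 2 * m + 1 := by omega
    have hm2 : (-2 : ℤ) ≠ 2 * m + 1 := by omega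
    have h4 : (4 : ℤ) ≠ 2 * m + 1 := by omega
    have hm4 : (-4 : ℤ) ≠ 2 * m + 1 := by omega
    simp [gE23, h0, h2, hm2, h4, hm4]

/-- for every real `c`, the flow `gE23 c` is a generalized
symmetry of `u̇_n = (u_n² + c u_n)(u_{n+2} - u_{n-2})`. -/
theorem modified_volterra_gen_symmetry (c : ℝ) :
    IsGenSymmetry (fE23 c) (gE23 c) (fun _ => True) := by
  intro u _
  have e4 : Finset.Icc (-4 : ℤ) 4 = {-4, -3, -2, -1, 0, 1, 2, 3, 4} := by decide
  have e2 : Finset.Icc (-2 : ℤ) 2 = {-2, -1, 0, 1, 2} := by decide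
  have o3 : Odd (3 : ℤ) := by decide
  have om3 : Odd (-3 : ℤ) := by decide
  have om1 : Odd (-1 : ℤ) := by decide
  rw [e4, e2]
  repeat rw [Finset.sum_insert (by decide)]
  simp only [Finset.sum_singleton, pd_fE23_zero, pd_fE23_two, pd_fE23_neg_two, pd_gE23_zero,
    pd_gE23_two, pd_gE23_neg_two, pd_gE23_four, pd_gE23_neg_four, pd_fE23_of_odd c u odd_one,
    pd_fE23_of_odd c u om1, pd_gE23_of_odd c u odd_one, pd_gE23_of_odd c u om1,
    pd_gE23_of_odd c u o3, pd_gE23_of_odd c u om3, mul_zero, zero_add]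
  simp only [fE23, gE23, shift]
  norm_num
  ring
end
end

section
/- For every real constant a, the flow u_{n,τ} = g_n with g_0 = (u_0²+a u_0)·( P_2 − P_{−1} ), where P_0 = u_0 u_{−1}·[ (u_2u_1 + u_{−1}u_{−2})(u_0+a) + (u_1u_0 + u_{−2}u_{−3})(u_{−1}+a) ] + a u_0² u_{−1}² and P_k denotes the k-th shift of P_0, is a generalized symmetry of equation (E12), u̇_n = f_n with f_0 = (u_0²+a u_0)(u_2u_1 − u_{−1}u_{−2}); i.e. Σ_{k=−4}^{4} f_k · ∂g_0/∂u_k = Σ_{k=−2}^{2} g_k · ∂f_0/∂u_k holds identically in u_{−6},…,u_6. -/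
/-!
The right-hand sides `fE12 a` and `gE12 a` are polynomials in finitely many lattice variables, so
both sides of the compatibility condition can be computed by the product rule. Writing
`δ j = ∂u_j/∂u_k`, each partial derivative is a linear form in the `δ j` (`pd_fE12`, `pd_gE12`).
Summing over `k` against `f_k` (resp. `g_k`) replaces each `δ j` by `f_j` (resp. `g_j`), which
turns the condition into a polynomial identity in `u_{-6}, …, u_6` and `a`.
-/

open Finset

noncomputable section

/-- Right-hand side of (E12). -/
def fE12 (a : ℝ) (u : ℤ → ℝ) : ℝ :=
  ((u 0) ^ 2 + a * u 0) * (u 2 * u 1 - u (-1) * u (-2))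

/-- `P_0 = u_0 u_{-1}[(u_2u_1 + u_{-1}u_{-2})(u_0+a) + (u_1u_0 + u_{-2}u_{-3})(u_{-1}+a)] + a u_0² u_{-1}²`. -/
def PE12 (a : ℝ) (u : ℤ → ℝ) : ℝ :=
  u 0 * u (-1) * ((u 2 * u 1 + u (-1) * u (-2)) * (u 0 + a)
    + (u 1 * u 0 + u (-2) * u (-3)) * (u (-1) + a))
    + a * (u 0) ^ 2 * (u (-1)) ^ 2

/-- Generalized symmetry of (E12): `g_0 = (u_0² + a u_0)(P_2 - P_{-1})`. -/
def gE12 (a : ℝ) (u : ℤ → ℝ) : ℝ :=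
  ((u 0) ^ 2 + a * u 0) * (PE12 a (shift 2 u) - PE12 a (shift (-1) u))

/-- The partial derivative `∂u_j/∂u_k` of one lattice variable with respect to another. -/
def delta (k j : ℤ) : ℝ := if j = k then 1 else 0

lemma hasDerivAt_coord (u : ℤ → ℝ) (k j : ℤ) :
    HasDerivAt (fun x => Function.update u k x j) (delta k j) (u k) := by
  by_cases h : j = k
  · subst h
    simpa [delta] using hasDerivAt_id' (u j)
  · simpa [delta, h] using hasDerivAt_const (u k) (u j)

/-- The linearization of `fE12 a` at `u`, applied to the direction `d`. -/
def linF (a : ℝ) (u d : ℤ → ℝ) : ℝ :=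
  (2 * u 0 + a) * d 0 * (u 2 * u 1 - u (-1) * u (-2))
    + ((u 0) ^ 2 + a * u 0)
      * (d 2 * u 1 + u 2 * d 1 - (d (-1) * u (-2) + u (-1) * d (-2)))

/-- The linearization of `PE12 a` at `u`, applied to the direction `d`. -/
def linP (a : ℝ) (u d : ℤ → ℝ) : ℝ :=
  (d 0 * u (-1) + u 0 * d (-1)) * ((u 2 * u 1 + u (-1) * u (-2)) * (u 0 + a)
    + (u 1 * u 0 + u (-2) * u (-3)) * (u (-1) + a))
  + u 0 * u (-1) * (
      (d 2 * u 1 + u 2 * d 1 + (d (-1) * u (-2) + u (-1) * d (-2))) * (u 0 + a)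
      + (u 2 * u 1 + u (-1) * u (-2)) * d 0
      + ((d 1 * u 0 + u 1 * d 0 + (d (-2) * u (-3) + u (-2) * d (-3))) * (u (-1) + a)
      + (u 1 * u 0 + u (-2) * u (-3)) * d (-1)))
  + 2 * a * (u 0 * u (-1)) * (d 0 * u (-1) + u 0 * d (-1))

/-- The linearization of `gE12 a` at `u`, applied to the direction `d`. -/
def linG (a : ℝ) (u d : ℤ → ℝ) : ℝ :=
  (2 * u 0 + a) * d 0 * (PE12 a (shift 2 u) - PE12 a (shift (-1) u))
    + ((u 0) ^ 2 + a * u 0)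
      * (linP a (shift 2 u) (shift 2 d) - linP a (shift (-1) u) (shift (-1) d))

/-- Chain rule for `PE12 a` along a curve `c` in sequence space. -/
lemma hasDerivAt_PE12 (a : ℝ) {c : ℝ → ℤ → ℝ} {d : ℤ → ℝ} {t : ℝ}
    (h : ∀ j, HasDerivAt (fun x => c x j) (d j) t) :
    HasDerivAt (fun x => PE12 a (c x)) (linP a (c t) d) t := by
  have key := (((h 0).mul (h (-1))).mul
    (((((h 2).mul (h 1)).add ((h (-1)).mul (h (-2)))).mul ((h 0).add_const a)).add
      ((((h 1).mul (h 0)).add ((h (-2)).mul (h (-3)))).mul ((h (-1)).add_const a)))).add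
    ((((h 0).pow 2).const_mul a).mul ((h (-1)).pow 2))
  refine key.congr_deriv ?_
  simp only [linP, Pi.mul_apply, Pi.add_apply, Pi.pow_apply]
  push_cast
  ring

/-- Chain rule for `fE12 a` along a curve `c` in sequence space. -/
lemma hasDerivAt_fE12 (a : ℝ) {c : ℝ → ℤ → ℝ} {d : ℤ → ℝ} {t : ℝ}
    (h : ∀ j, HasDerivAt (fun x => c x j) (d j) t) :
    HasDerivAt (fun x => fE12 a (c x)) (linF a (c t) d) t := by
  have key := (((h 0).pow 2).add ((h 0).const_mul a)).mul
    (((h 2).mul (h 1)).sub ((h (-1)).mul (h (-2))))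
  refine key.congr_deriv ?_
  simp only [linF, Pi.mul_apply, Pi.add_apply, Pi.sub_apply, Pi.pow_apply]
  push_cast
  ring

/-- Chain rule for `gE12 a` along a curve `c` in sequence space. -/
lemma hasDerivAt_gE12 (a : ℝ) {c : ℝ → ℤ → ℝ} {d : ℤ → ℝ} {t : ℝ}
    (h : ∀ j, HasDerivAt (fun x => c x j) (d j) t) :
    HasDerivAt (fun x => gE12 a (c x)) (linG a (c t) d) t := by
  have hP (s : ℤ) : HasDerivAt (fun x => PE12 a (shift s (c x)))
      (linP a (shift s (c t)) (shift s d)) t :=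
    hasDerivAt_PE12 a (c := fun x => shift s (c x)) fun j => h (j + s)
  have key := (((h 0).pow 2).add ((h 0).const_mul a)).mul ((hP 2).sub (hP (-1)))
  refine key.congr_deriv ?_
  simp only [linG, Pi.add_apply, Pi.sub_apply, Pi.pow_apply]
  push_cast
  ring

lemma pd_fE12 (a : ℝ) (k : ℤ) (u : ℤ → ℝ) : pd (fE12 a) k u = linF a u (delta k) := by
  simpa [pd] using (hasDerivAt_fE12 a (hasDerivAt_coord u k)).deriv

lemma pd_gE12 (a : ℝ) (k : ℤ) (u : ℤ → ℝ) : pd (gE12 a) k u = linG a u (delta k) := by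
  simpa [pd] using (hasDerivAt_gE12 a (hasDerivAt_coord u k)).deriv

/-- `Σ_k w_k ∂f_0/∂u_k` is the linearization of `f_0` in the direction `w`. -/
lemma sum_pd_fE12 (a : ℝ) (u w : ℤ → ℝ) :
    ∑ k ∈ Finset.Icc (-2 : ℤ) 2, w k * pd (fE12 a) k u = linF a u w := by
  have hI : Finset.Icc (-2 : ℤ) 2 = {-2, -1, 0, 1, 2} := by decide
  simp [hI, pd_fE12, linF, delta]
  ring

/-- `Σ_k w_k ∂g_0/∂u_k` is the linearization of `g_0` in the direction `w`. -/
lemma sum_pd_gE12 (a : ℝ) (u w : ℤ → ℝ) :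
    ∑ k ∈ Finset.Icc (-4 : ℤ) 4, w k * pd (gE12 a) k u = linG a u w := by
  have hI : Finset.Icc (-4 : ℤ) 4 = {-4, -3, -2, -1, 0, 1, 2, 3, 4} := by decide
  simp [hI, pd_gE12, linG, linP, delta, shift]
  ring

/-- for every real `a`, the flow `gE12 a` is a generalized
symmetry of (E12). -/
theorem E12_gen_symmetry (a : ℝ) :
    IsGenSymmetry (fE12 a) (gE12 a) (fun _ => True) := by
  intro u _
  rw [sum_pd_gE12 a u fun k => fE12 a (shift k u), sum_pd_fE12 a u fun k => gE12 a (shift k u)]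
  simp only [linG, linF, linP, fE12, gE12, PE12, shift]
  norm_num only
  ring
end
end

section
/- For all real constants a and c, the flow u_{n,τ} = g_n with g_0 = u_3u_1/u_2 + u_4u_2u_0/(u_3u_1) − a⁴·( u_{−1}u_{−3}/u_{−2} + u_0u_{−2}u_{−4}/(u_{−1}u_{−3}) ) is a generalized symmetry of equation (E9), u̇_n = f_n with f_0 = u_2u_0/u_1 + u_1 − a²( u_{−1} + u_0u_{−2}/u_{−1} ) + c u_0; i.e. Σ_{k=−4}^{4} f_k · ∂g_0/∂u_k = Σ_{k=−2}^{2} g_k · ∂f_0/∂u_k holds identically on the open set of (u_{−6},…,u_6) ∈ ℝ^{13} where all u_j ≠ 0. -/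
/-!
As a function of any single variable `u_k ≠ 0`, each of `fE9` and `gE9` is a Laurent polynomial
`A x + B / x + C`, whose derivative is `A - B / x ^ 2`; this makes every partial derivative
explicit (`pd_laurent`, `pd_gE9`, `pd_fE9`). The compatibility condition then becomes an
identity of rational functions in `u_{-6}, …, u_6`, `a`, `c` whose denominators are monomials,
and it is verified by clearing denominators.
-/

open Finset

noncomputable section

/-- Right-hand side of (E9). -/
def fE9 (a c : ℝ) (u : ℤ → ℝ) : ℝ :=
  u 2 * u 0 / u 1 + u 1 - a ^ 2 * (u (-1) + u 0 * u (-2) / u (-1)) + c * u 0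

/-- Generalized symmetry of (E9). -/
def gE9 (a : ℝ) (u : ℤ → ℝ) : ℝ :=
  u 3 * u 1 / u 2 + u 4 * u 2 * u 0 / (u 3 * u 1)
    - a ^ 4 * (u (-1) * u (-3) / u (-2) + u 0 * u (-2) * u (-4) / (u (-1) * u (-3)))

/-- A lattice function of the form `A x + B / x + C` in its variable `x = u_k` has partial
derivative `A - B / u_k ^ 2`. The formula is required at `x = 0` too, where both sides use the
convention `B / 0 = 0`. -/
theorem pd_laurent (φ : (ℤ → ℝ) → ℝ) (k : ℤ) (u : ℤ → ℝ) (A B C : ℝ) (hk : u k ≠ 0)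
    (h : ∀ x, φ (Function.update u k x) = A * x + B * x⁻¹ + C) :
    pd φ k u = A - B / u k ^ 2 := by
  unfold pd
  simp only [h]
  have h1 := (((hasDerivAt_id (u k)).const_mul A).add
    ((hasDerivAt_inv hk).const_mul B)).add_const C
  refine (HasDerivAt.deriv h1).trans ?_
  ring

theorem pd_fE9 (a c : ℝ) (u : ℤ → ℝ) (hu : ∀ j : ℤ, u j ≠ 0) :
    pd (fE9 a c) (-2) u =
      -(a ^ 2 * (u 0 / u (-1))) ∧
    pd (fE9 a c) (-1) u =
      -a ^ 2 - -(a ^ 2 * (u 0 * u (-2))) / u (-1) ^ 2 ∧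
    pd (fE9 a c) 0 u =
      u 2 / u 1 - a ^ 2 * (u (-2) / u (-1)) + c ∧
    pd (fE9 a c) 1 u =
      1 - u 2 * u 0 / u 1 ^ 2 ∧
    pd (fE9 a c) 2 u =
      u 0 / u 1 := by
  refine ⟨?_, ?_, ?_, ?_, ?_⟩
  · refine (pd_laurent (fE9 a c) (-2) u
      (-(a ^ 2 * (u 0 / u (-1)))) 0
      (u 2 * u 0 / u 1 + u 1 - a ^ 2 * u (-1) + c * u 0)
      (hu _) ?_).trans ?_
    · intro x
      simp [fE9]
      ring
    · ring
  · refine (pd_laurent (fE9 a c) (-1) u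
      (-a ^ 2) (-(a ^ 2 * (u 0 * u (-2))))
      (u 2 * u 0 / u 1 + u 1 + c * u 0)
      (hu _) ?_).trans ?_
    · intro x
      simp [fE9]
      ring
    · ring
  · refine (pd_laurent (fE9 a c) 0 u
      (u 2 / u 1 - a ^ 2 * (u (-2) / u (-1)) + c) 0
      (u 1 - a ^ 2 * u (-1))
      (hu _) ?_).trans ?_
    · intro x
      simp [fE9]
      ring
    · ring
  · refine (pd_laurent (fE9 a c) 1 u
      1 (u 2 * u 0)
      (-(a ^ 2 * (u (-1) + u 0 * u (-2) / u (-1))) + c * u 0)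
      (hu _) ?_).trans ?_
    · intro x
      simp [fE9]
      ring
    · ring
  · refine (pd_laurent (fE9 a c) 2 u
      (u 0 / u 1) 0
      (u 1 - (a ^ 2 * (u (-1) + u 0 * u (-2) / u (-1))) + c * u 0)
      (hu _) ?_).trans ?_
    · intro x
      simp [fE9]
      ring
    · ring

theorem pd_gE9 (a : ℝ) (u : ℤ → ℝ) (hu : ∀ j : ℤ, u j ≠ 0) :
    pd (gE9 a) (-4) u =
      -(a ^ 4 * (u 0 * u (-2) / (u (-1) * u (-3)))) ∧
    pd (gE9 a) (-3) u =
      -(a ^ 4 * (u (-1) / u (-2))) - -(a ^ 4 * (u 0 * u (-2) * u (-4) / u (-1))) / u (-3) ^ 2 ∧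
    pd (gE9 a) (-2) u =
      -(a ^ 4 * (u 0 * u (-4) / (u (-1) * u (-3)))) - -(a ^ 4 * (u (-1) * u (-3))) / u (-2) ^ 2 ∧
    pd (gE9 a) (-1) u =
      -(a ^ 4 * (u (-3) / u (-2))) - -(a ^ 4 * (u 0 * u (-2) * u (-4) / u (-3))) / u (-1) ^ 2 ∧
    pd (gE9 a) 0 u =
      u 4 * u 2 / (u 3 * u 1) - a ^ 4 * (u (-2) * u (-4) / (u (-1) * u (-3))) ∧
    pd (gE9 a) 1 u =
      u 3 / u 2 - u 4 * u 2 * u 0 / u 3 / u 1 ^ 2 ∧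
    pd (gE9 a) 2 u =
      u 4 * u 0 / (u 3 * u 1) - u 3 * u 1 / u 2 ^ 2 ∧
    pd (gE9 a) 3 u =
      u 1 / u 2 - u 4 * u 2 * u 0 / u 1 / u 3 ^ 2 ∧
    pd (gE9 a) 4 u =
      u 2 * u 0 / (u 3 * u 1) := by
  refine ⟨?_, ?_, ?_, ?_, ?_, ?_, ?_, ?_, ?_⟩
  · refine (pd_laurent (gE9 a) (-4) u
      (-(a ^ 4 * (u 0 * u (-2) / (u (-1) * u (-3))))) 0
      (u 3 * u 1 / u 2 + u 4 * u 2 * u 0 / (u 3 * u 1) - a ^ 4 * (u (-1) * u (-3) / u (-2)))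
      (hu _) ?_).trans ?_
    · intro x
      simp [gE9]
      ring
    · ring
  · refine (pd_laurent (gE9 a) (-3) u
      (-(a ^ 4 * (u (-1) / u (-2)))) (-(a ^ 4 * (u 0 * u (-2) * u (-4) / u (-1))))
      (u 3 * u 1 / u 2 + u 4 * u 2 * u 0 / (u 3 * u 1))
      (hu _) ?_).trans ?_
    · intro x
      simp [gE9]
      ring
    · ring
  · refine (pd_laurent (gE9 a) (-2) u
      (-(a ^ 4 * (u 0 * u (-4) / (u (-1) * u (-3))))) (-(a ^ 4 * (u (-1) * u (-3))))
      (u 3 * u 1 / u 2 + u 4 * u 2 * u 0 / (u 3 * u 1))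
      (hu _) ?_).trans ?_
    · intro x
      simp [gE9]
      ring
    · ring
  · refine (pd_laurent (gE9 a) (-1) u
      (-(a ^ 4 * (u (-3) / u (-2)))) (-(a ^ 4 * (u 0 * u (-2) * u (-4) / u (-3))))
      (u 3 * u 1 / u 2 + u 4 * u 2 * u 0 / (u 3 * u 1))
      (hu _) ?_).trans ?_
    · intro x
      simp [gE9]
      ring
    · ring
  · refine (pd_laurent (gE9 a) 0 u
      (u 4 * u 2 / (u 3 * u 1) - a ^ 4 * (u (-2) * u (-4) / (u (-1) * u (-3)))) 0
      (u 3 * u 1 / u 2 - a ^ 4 * (u (-1) * u (-3) / u (-2)))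
      (hu _) ?_).trans ?_
    · intro x
      simp [gE9]
      ring
    · ring
  · refine (pd_laurent (gE9 a) 1 u
      (u 3 / u 2) (u 4 * u 2 * u 0 / u 3)
      (-(a ^ 4 * (u (-1) * u (-3) / u (-2) + u 0 * u (-2) * u (-4) / (u (-1) * u (-3)))))
      (hu _) ?_).trans ?_
    · intro x
      simp [gE9]
      ring
    · ring
  · refine (pd_laurent (gE9 a) 2 u
      (u 4 * u 0 / (u 3 * u 1)) (u 3 * u 1)
      (-(a ^ 4 * (u (-1) * u (-3) / u (-2) + u 0 * u (-2) * u (-4) / (u (-1) * u (-3)))))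
      (hu _) ?_).trans ?_
    · intro x
      simp [gE9]
      ring
    · ring
  · refine (pd_laurent (gE9 a) 3 u
      (u 1 / u 2) (u 4 * u 2 * u 0 / u 1)
      (-(a ^ 4 * (u (-1) * u (-3) / u (-2) + u 0 * u (-2) * u (-4) / (u (-1) * u (-3)))))
      (hu _) ?_).trans ?_
    · intro x
      simp [gE9]
      ring
    · ring
  · refine (pd_laurent (gE9 a) 4 u
      (u 2 * u 0 / (u 3 * u 1)) 0
      (u 3 * u 1 / u 2 - (a ^ 4 * (u (-1) * u (-3) / u (-2) + u 0 * u (-2) * u (-4) / (u (-1) * u (-3)))))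
      (hu _) ?_).trans ?_
    · intro x
      simp [gE9]
      ring
    · ring

/-- for all real `a`, `c`, the flow `gE9 a` is a generalized
symmetry of (E9) on the open set where all `u_j ≠ 0`. -/
theorem E9_gen_symmetry (a c : ℝ) :
    IsGenSymmetry (fE9 a c) (gE9 a) (fun u => ∀ j : ℤ, u j ≠ 0) := by
  intro u hu
  have e1 (F : ℤ → ℝ) : ∑ k ∈ Finset.Icc (-4 : ℤ) 4, F k =
      F (-4) + F (-3) + F (-2) + F (-1) + F 0 + F 1 + F 2 + F 3 + F 4 := by
    have : Finset.Icc (-4 : ℤ) 4 = {-4, -3, -2, -1, 0, 1, 2, 3, 4} := by decide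
    rw [this]
    simp [add_assoc]
  have e2 (F : ℤ → ℝ) : ∑ k ∈ Finset.Icc (-2 : ℤ) 2, F k =
      F (-2) + F (-1) + F 0 + F 1 + F 2 := by
    have : Finset.Icc (-2 : ℤ) 2 = {-2, -1, 0, 1, 2} := by decide
    rw [this]
    simp [add_assoc]
  obtain ⟨f1, f2, f3, f4, f5⟩ := pd_fE9 a c u hu
  obtain ⟨g1, g2, g3, g4, g5, g6, g7, g8, g9⟩ := pd_gE9 a u hu
  rw [e1, e2, f1, f2, f3, f4, f5, g1, g2, g3, g4, g5, g6, g7, g8, g9]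
  simp only [fE9, gE9, shift]
  clear e1 e2 f1 f2 f3 f4 f5 g1 g2 g3 g4 g5 g6 g7 g8 g9
  -- evaluates the shifted indices, leaving only `u (-6), …, u 6`
  norm_num
  have hm6 := hu (-6)
  have hm5 := hu (-5)
  have hm4 := hu (-4)
  have hm3 := hu (-3)
  have hm2 := hu (-2)
  have hm1 := hu (-1)
  have hp0 := hu 0
  have hp1 := hu 1
  have hp2 := hu 2
  have hp3 := hu 3
  have hp4 := hu 4
  have hp5 := hu 5
  have hp6 := hu 6
  generalize u (-6) = m6 at *
  generalize u (-5) = m5 at *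
  generalize u (-4) = m4 at *
  generalize u (-3) = m3 at *
  generalize u (-2) = m2 at *
  generalize u (-1) = m1 at *
  generalize u 0 = p0 at *
  generalize u 1 = p1 at *
  generalize u 2 = p2 at *
  generalize u 3 = p3 at *
  generalize u 4 = p4 at *
  generalize u 5 = p5 at *
  generalize u 6 = p6 at *
  field_simp
  ring
end
end
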